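/- arXiv:0810.2673 — 3 statements merged into one kernel-verified Lean document; each statement's English description precedes it below -/
import Mathlib

section
/- Let A and B be unital complex Banach algebras, I ⊆ A and J ⊆ B proper closed two-sided ideals with B/J semisimple, and T : A → B a linear map. Then the following are equivalent: (a) T is essentially spectrally bounded (there exists M ≥ 0 with r(Tx + J) ≤ M·r(x + I) for all x ∈ A) and surjective modulo J (for every y ∈ B there is x ∈ A with y − Tx ∈ J); (b) T maps I into J, and the induced linear map T̂ : A/I → B/J, x + I ↦ Tx + J, is spectrally bounded and surjective. -/
open scoped ENNReal NNReal

/-- The quotient of a complex algebra by a two-sided ideal is a complex algebra. -/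
noncomputable instance TwoSidedIdeal.quotientAlgebra {A : Type*} [Ring A] [Algebra ℂ A]
    (I : TwoSidedIdeal A) : Algebra ℂ I.ringCon.Quotient :=
  (I.ringCon.mk'.comp (algebraMap ℂ A)).toAlgebra' (by
    intro c x
    induction x using Quotient.ind
    rename_i a
    show I.ringCon.mk' (algebraMap ℂ A c) * I.ringCon.mk' a =
      I.ringCon.mk' a * I.ringCon.mk' (algebraMap ℂ A c)
    rw [← map_mul, ← map_mul, Algebra.commutes])

/-!
Let `f` be an entire function with values in a Banach algebra. The maximum principle for
`f z ^ n * f z⁻¹ ^ n` on the annulus `R⁻¹ < |z| < R` bounds `r (f 1) ^ 2` by the product of the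
suprema of `r (f z)` over the two boundary circles. If `r (f z) ≤ K` everywhere, letting `R → ∞`
gives `r (f 1) ^ 2 ≤ r (f 0) * K`, and this forces `r (f z)` to be constant.

Consequently, if `r (b + t • y)` is bounded in `t : ℂ` for every `b`, then `r (b + t • y) = r b`.
In particular `y` is quasinilpotent, and so is `u * y * u⁻¹ - y` for every unit `u`. If `y` were
outside some maximal left ideal `m`, there would be `w ∈ m` with `w * y - 1 ∈ m`, and for small
`t ≠ 0` the unit `u = 1 + t • w` would put `t` in the spectrum of `u * y * u⁻¹ - y`. Hence `y` lies
in the Jacobson radical.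

For `x ∈ I` and `b = T a + J`, the radius of `T (a + t • x) + J` is at most `M * r (a + I)` for all
`t`, so `T x + J` lies in the radical of `B / J`, which is zero.
-/

open Filter Topology Metric

section Gelfand

variable {C : Type*} [NormedRing C] [NormedAlgebra ℂ C] [CompleteSpace C]

theorem spectralRadius_le_of_frequently_nnnorm_pow_le {a : C} {τ : ℝ≥0∞}
    (h : ∃ᶠ n : ℕ in atTop, (‖a ^ n‖₊ : ℝ≥0∞) ≤ τ ^ n) : spectralRadius ℂ a ≤ τ := by
  refine le_of_tendsto_of_frequently
    (spectrum.pow_nnnorm_pow_one_div_tendsto_nhds_spectralRadius a) ?_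
  refine (h.and_eventually (eventually_gt_atTop 0)).mono fun n ⟨hn, hpos⟩ ↦ ?_
  rwa [one_div, ENNReal.rpow_inv_le_iff (by exact_mod_cast hpos), ENNReal.rpow_natCast]

theorem exists_nnnorm_pow_two_pow_lt {a : C} {ρ : ℝ≥0} (h : spectralRadius ℂ a < ρ) :
    ∃ j : ℕ, ‖a ^ 2 ^ j‖₊ < ρ ^ 2 ^ j := by
  have hlim := (spectrum.pow_nnnorm_pow_one_div_tendsto_nhds_spectralRadius a).comp
    (tendsto_pow_atTop_atTop_of_one_lt one_lt_two)
  obtain ⟨j, hj⟩ := (hlim.eventually_lt_const h).exists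
  refine ⟨j, ?_⟩
  rw [Function.comp_apply, one_div, ENNReal.rpow_inv_lt_iff (by positivity),
    ENNReal.rpow_natCast] at hj
  exact_mod_cast hj

theorem monotone_nnnorm_pow_two_pow_lt {E : Type*} [SeminormedRing E] {a : E} {ρ : ℝ≥0} :
    Monotone fun j : ℕ ↦ ‖a ^ 2 ^ j‖₊ < ρ ^ 2 ^ j := by
  refine monotone_nat_of_le_succ fun j hj ↦ ?_
  rw [pow_succ, pow_mul, pow_mul]
  exact (nnnorm_pow_le' _ two_pos).trans_lt (pow_lt_pow_left₀ hj zero_le two_ne_zero)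

/-- The exponents `2 ^ j` make the open sets `{x | ‖f x ^ 2 ^ j‖ < ρ ^ 2 ^ j}` increase with `j`. -/
theorem eventually_nnnorm_pow_two_pow_lt {X : Type*} [TopologicalSpace X] {K : Set X}
    (hK : IsCompact K) {f : X → C} (hf : Continuous f) {ρ : ℝ≥0}
    (h : ∀ x ∈ K, spectralRadius ℂ (f x) < ρ) :
    ∀ᶠ j : ℕ in atTop, ∀ x ∈ K, ‖f x ^ 2 ^ j‖₊ < ρ ^ 2 ^ j := by
  obtain ⟨i, hi⟩ := hK.elim_directed_cover (fun j : ℕ ↦ {x | ‖f x ^ 2 ^ j‖₊ < ρ ^ 2 ^ j})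
    (fun j ↦ isOpen_lt (by fun_prop) continuous_const)
    (fun x hx ↦ Set.mem_iUnion.2 (exists_nnnorm_pow_two_pow_lt (h x hx)))
    (Monotone.directed_le fun _ _ hij _ hx ↦ monotone_nnnorm_pow_two_pow_lt hij hx)
  filter_upwards [eventually_ge_atTop i] with j hij x hx
  exact monotone_nnnorm_pow_two_pow_lt hij (hi hx)

theorem upperSemicontinuous_spectralRadius :
    UpperSemicontinuous (spectralRadius ℂ : C → ℝ≥0∞) := by
  intro a ρ hρ
  obtain ⟨ρ', haρ', hρ'⟩ := ENNReal.lt_iff_exists_nnreal_btwn.1 hρ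
  have hsub : spectrum ℂ a ⊆ ball 0 ρ' := fun k hk ↦ mem_ball_zero_iff.2 <| by
    exact_mod_cast (le_iSup₂ (f := fun k (_ : k ∈ spectrum ℂ a) ↦ (‖k‖₊ : ℝ≥0∞)) k hk).trans_lt
      haρ'
  have hball := upperHemicontinuousAt_iff_forall_isOpen.1
    (upperHemicontinuous_spectrum ℂ C a) _ isOpen_ball hsub
  filter_upwards [hball] with b hb
  refine lt_of_le_of_lt (iSup₂_le fun k hk ↦ ?_) hρ'
  exact_mod_cast (mem_ball_zero_iff.1 (hb hk)).le

end Gelfand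

section Liouville

theorem norm_mul_self_le_of_norm_le_on_circles {E : Type*} [NormedRing E] [NormedAlgebra ℂ E]
    {f : ℂ → E} (hf : Differentiable ℂ f) {R p q : ℝ} (hR : 1 < R)
    (hp : ∀ z, ‖z‖ = R⁻¹ → ‖f z‖ ≤ p) (hq : ∀ z, ‖z‖ = R → ‖f z‖ ≤ q) :
    ‖f 1 * f 1‖ ≤ p * q := by
  have hRinv : R⁻¹ < 1 := inv_lt_one_of_one_lt₀ hR
  set annulus : Set ℂ := norm ⁻¹' Set.Ioo R⁻¹ R
  have hbounded : Bornology.IsBounded annulus :=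
    isBounded_ball.subset fun z hz ↦ mem_ball_zero_iff.2 hz.2
  have hclosure : ∀ z ∈ closure annulus, z ≠ 0 := by
    rintro z hz rfl
    have h0 := closure_Ioo (hRinv.trans hR).ne ▸ continuous_norm.closure_preimage_subset _ hz
    exact (inv_pos.2 (one_pos.trans hR)).not_ge (norm_zero (E := ℂ) ▸ h0.1)
  have hdiff : DiffContOnCl ℂ (fun z ↦ f z * f z⁻¹) annulus :=
    DifferentiableOn.diffContOnCl fun z hz ↦
      ((hf z).mul ((hf _).comp z (differentiableAt_inv (hclosure z hz)))).differentiableWithinAt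
  have hfrontier : ∀ z ∈ frontier annulus, ‖f z * f z⁻¹‖ ≤ p * q := by
    intro z hz
    refine (norm_mul_le _ _).trans ?_
    obtain h | h : ‖z‖ = R⁻¹ ∨ ‖z‖ = R := by
      simpa [frontier_Ioo (hRinv.trans hR)] using continuous_norm.frontier_preimage_subset _ hz
    · have hz' := hp z h
      exact mul_le_mul hz' (hq _ (by simp [h])) (norm_nonneg _) ((norm_nonneg _).trans hz')
    · have hz' := hq z h
      rw [mul_comm p]
      exact mul_le_mul hz' (hp _ (by simp [h])) (norm_nonneg _) ((norm_nonneg _).trans hz')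
  have hone : (1 : ℂ) ∈ closure annulus := subset_closure (by simpa [annulus] using ⟨hRinv, hR⟩)
  simpa using Complex.norm_le_of_forall_mem_frontier_norm_le hbounded hdiff hfrontier hone

variable {C : Type*} [NormedRing C] [NormedAlgebra ℂ C] [CompleteSpace C]
  {f : ℂ → C}

theorem spectralRadius_sq_le_of_lt_on_circles (hf : Differentiable ℂ f) {R : ℝ} {ρ σ : ℝ≥0}
    (hR : 1 < R) (hρ : ∀ z, ‖z‖ = R⁻¹ → spectralRadius ℂ (f z) < ρ)
    (hσ : ∀ z, ‖z‖ = R → spectralRadius ℂ (f z) < σ) :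
    spectralRadius ℂ (f 1) ^ 2 ≤ ρ * σ := by
  have hinner := eventually_nnnorm_pow_two_pow_lt (isCompact_sphere 0 R⁻¹) hf.continuous
    fun z hz ↦ hρ z (mem_sphere_zero_iff_norm.1 hz)
  have houter := eventually_nnnorm_pow_two_pow_lt (isCompact_sphere 0 R) hf.continuous
    fun z hz ↦ hσ z (mem_sphere_zero_iff_norm.1 hz)
  have hpow : ∀ᶠ j : ℕ in atTop, (‖(f 1 ^ 2) ^ 2 ^ j‖₊ : ℝ≥0∞) ≤ (ρ * σ) ^ 2 ^ j := by
    filter_upwards [hinner, houter] with j hinner houter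
    have hmax := norm_mul_self_le_of_norm_le_on_circles (hf.pow (2 ^ j)) hR
      (fun z hz ↦ (hinner z (mem_sphere_zero_iff_norm.2 hz)).le)
      (fun z hz ↦ (houter z (mem_sphere_zero_iff_norm.2 hz)).le)
    rw [Pi.pow_apply, ← pow_two, ← pow_mul', pow_mul] at hmax
    rw [mul_pow]
    exact_mod_cast hmax
  exact (spectrum.spectralRadius_pow_le (f 1) 2 two_ne_zero).trans <|
    spectralRadius_le_of_frequently_nnnorm_pow_le <|
      (tendsto_pow_atTop_atTop_of_one_lt one_lt_two).frequently hpow.frequently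

theorem spectralRadius_sq_le_mul_of_le (hf : Differentiable ℂ f) {K : ℝ≥0∞} (hK : K ≠ ∞)
    (h : ∀ z, spectralRadius ℂ (f z) ≤ K) :
    spectralRadius ℂ (f 1) ^ 2 ≤ spectralRadius ℂ (f 0) * K := by
  refine ENNReal.le_mul_of_forall_lt (.inr hK) (.inl ((h 0).trans_lt hK.lt_top).ne)
    fun ρ hρ σ hσ ↦ ?_
  obtain ⟨ρ', hρ', hρρ'⟩ := ENNReal.lt_iff_exists_nnreal_btwn.1 hρ
  obtain ⟨σ', hσ', hσσ'⟩ := ENNReal.lt_iff_exists_nnreal_btwn.1 hσ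
  have hnear : ∀ᶠ z in 𝓝 0, spectralRadius ℂ (f z) < ρ' :=
    (upperSemicontinuous_spectralRadius.comp hf.continuous) 0 ρ' hρ'
  obtain ⟨ε, hε, hball⟩ := Metric.eventually_nhds_iff.1 hnear
  obtain ⟨R, hR⟩ := exists_gt (max 1 ε⁻¹)
  obtain ⟨hR, hεR⟩ := max_lt_iff.1 hR
  calc spectralRadius ℂ (f 1) ^ 2 ≤ ρ' * σ' :=
        spectralRadius_sq_le_of_lt_on_circles hf hR
          (fun z hz ↦ hball (by rw [dist_zero_right, hz]; exact inv_lt_of_inv_lt₀ hε hεR))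
          (fun z _ ↦ (h z).trans_lt hσ')
    _ ≤ ρ * σ := mul_le_mul' hρρ'.le hσσ'.le

theorem spectralRadius_apply_eq_of_bounded (hf : Differentiable ℂ f) {K : ℝ≥0∞} (hK : K ≠ ∞)
    (h : ∀ z, spectralRadius ℂ (f z) ≤ K) (z w : ℂ) :
    spectralRadius ℂ (f z) = spectralRadius ℂ (f w) := by
  suffices hle : ∀ z w, spectralRadius ℂ (f z) ≤ spectralRadius ℂ (f w) from
    (hle z w).antisymm (hle w z)
  intro z w
  set S := ⨆ z, spectralRadius ℂ (f z)
  have hS : S ≠ ∞ := ((iSup_le h).trans_lt hK.lt_top).ne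
  have hsq (v : ℂ) : spectralRadius ℂ (f v) ^ 2 ≤ spectralRadius ℂ (f w) * S := by
    have hline : Differentiable ℂ fun t : ℂ ↦ f (w + t * (v - w)) := hf.comp (by fun_prop)
    simpa using spectralRadius_sq_le_mul_of_le hline hS fun t ↦
      le_iSup (fun z ↦ spectralRadius ℂ (f z)) _
  have hSS : S * S ≤ spectralRadius ℂ (f w) * S := by
    rw [← pow_two, ENNReal.iSup_pow]
    exact iSup_le hsq
  refine (le_iSup (fun z ↦ spectralRadius ℂ (f z)) z).trans ?_
  rcases eq_or_ne S 0 with hS0 | hS0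
  · exact hS0.trans_le zero_le
  · exact (ENNReal.mul_le_mul_iff_left hS0 hS).1 hSS

end Liouville

section MaximalLeftIdeals

theorem pow_mul_pow_sub_one_mem {R : Type*} [Ring R] {m : Ideal R} {y z : R}
    (hmy : ∀ v ∈ m, v * y ∈ m) (hzy : z * y - 1 ∈ m) (n : ℕ) : z ^ n * y ^ n - 1 ∈ m := by
  induction n with
  | zero => simp
  | succ n ih =>
    have hsplit : z ^ (n + 1) * y ^ (n + 1) - 1 =
        z * (z ^ n * y ^ n - 1) * y + (z * y - 1) := by
      rw [pow_succ' z, pow_succ y]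
      noncomm_ring
    rw [hsplit]
    exact m.add_mem (hmy _ (m.mul_mem_left z ih)) hzy

/-- For `u = 1 + t • w ≡ 1` modulo `m`, the element `u * y * u⁻¹ - y` acts on the image of `1` in
`R ⧸ m` as the scalar `t`. -/
theorem mem_spectrum_conj_sub {𝕜 R : Type*} [CommRing 𝕜] [Ring R] [Algebra 𝕜 R] {m : Ideal R}
    {y : R} (hm : m ≠ ⊤) {w : R} (hw : w ∈ m) (hwy : w * y - 1 ∈ m) {t : 𝕜} {u : Rˣ}
    (hu : (u : R) = 1 + t • w) : t ∈ spectrum 𝕜 (u * y * ↑u⁻¹ - y) := by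
  have hu_inv : (↑u⁻¹ : R) - 1 ∈ m := by
    have hneg : (↑u⁻¹ : R) - 1 = -(↑u⁻¹ * ((u : R) - 1)) := by
      rw [mul_sub, Units.inv_mul, mul_one, neg_sub]
    rw [hneg, hu, add_sub_cancel_left]
    exact m.neg_mem (m.mul_mem_left _ (Submodule.smul_of_tower_mem m t hw))
  have hmem : u * y * ↑u⁻¹ - y - algebraMap 𝕜 R t ∈ m := by
    have hsplit : u * y * ↑u⁻¹ - y - algebraMap 𝕜 R t =
        u * y * (↑u⁻¹ - 1) + t • (w * y - 1) := by
      rw [mul_sub, mul_one, hu, Algebra.algebraMap_eq_smul_one, add_mul, smul_mul_assoc, smul_sub]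
      noncomm_ring
    rw [hsplit]
    exact m.add_mem (m.mul_mem_left _ hu_inv) (Submodule.smul_of_tower_mem m t hwy)
  intro hunit
  exact hm (Ideal.eq_top_of_isUnit_mem m (by rw [← neg_sub]; exact m.neg_mem hmem) hunit)

variable {C : Type*} [NormedRing C] [NormedAlgebra ℂ C] [CompleteSpace C] {m : Ideal C} {y : C}

theorem spectralRadius_ne_zero_of_pow_mul_pow_sub_one_mem (hm : m ≠ ⊤) {z : C}
    (h : ∀ n : ℕ, z ^ n * y ^ n - 1 ∈ m) : spectralRadius ℂ y ≠ 0 := by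
  intro hy
  have hone_le (n : ℕ) : 1 ≤ ‖z ^ n * y ^ n‖ := by
    by_contra! hlt
    refine hm (Ideal.eq_top_of_norm_lt_one m (m.neg_mem (h n)) ?_)
    simpa using hlt
  have hρ : (0 : ℝ≥0) < (‖z‖₊ + 1)⁻¹ := by positivity
  obtain ⟨j, hj⟩ := exists_nnnorm_pow_two_pow_lt (hy.trans_lt (ENNReal.coe_pos.2 hρ))
  refine (hone_le (2 ^ j)).not_gt ?_
  calc ‖z ^ 2 ^ j * y ^ 2 ^ j‖ ≤ (‖z‖ + 1) ^ 2 ^ j * ‖y ^ 2 ^ j‖ := by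
        refine (norm_mul_le _ _).trans ?_
        gcongr
        exact (norm_pow_le' z (by positivity)).trans (by gcongr; linarith)
    _ < (‖z‖ + 1) ^ 2 ^ j * ((‖z‖ + 1)⁻¹) ^ 2 ^ j := by
        gcongr
        exact_mod_cast hj
    _ = 1 := by rw [← mul_pow, mul_inv_cancel₀ (by positivity), one_pow]

theorem exists_mem_mul_sub_one_mem (hm : m.IsMaximal) (hy : spectralRadius ℂ y = 0)
    (hym : y ∉ m) : ∃ w ∈ m, w * y - 1 ∈ m := by
  have hleft_inv {v : C} (hv : v ∉ m) : ∃ z, z * v - 1 ∈ m := by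
    obtain ⟨z, i, hi, hzi⟩ := hm.exists_inv hv
    exact ⟨z, by simpa [← hzi] using hi⟩
  have hmy : ∃ v ∈ m, v * y ∉ m := by
    by_contra! hmy
    obtain ⟨z, hz⟩ := hleft_inv hym
    exact spectralRadius_ne_zero_of_pow_mul_pow_sub_one_mem hm.ne_top
      (pow_mul_pow_sub_one_mem hmy hz) hy
  obtain ⟨v, hv, hvy⟩ := hmy
  obtain ⟨z, hz⟩ := hleft_inv hvy
  exact ⟨z * v, m.mul_mem_left z hv, by rwa [mul_assoc]⟩

theorem exists_spectralRadius_conj_sub_ne_zero (hm : m ≠ ⊤) {w : C} (hw : w ∈ m)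
    (hwy : w * y - 1 ∈ m) : ∃ u : Cˣ, spectralRadius ℂ (u * y * ↑u⁻¹ - y) ≠ 0 := by
  have hnear : ∀ᶠ t : ℂ in 𝓝 0, IsUnit (1 + t • w) := by
    have hcont : ContinuousAt (fun t : ℂ ↦ 1 + t • w) 0 := by fun_prop
    refine hcont.eventually (Units.isOpen.mem_nhds ?_)
    simp
  obtain ⟨t, ⟨u, hu⟩, ht⟩ := ((hnear.filter_mono nhdsWithin_le_nhds).and
    (self_mem_nhdsWithin (s := {0}ᶜ))).exists
  refine ⟨u, fun hzero ↦ mem_spectrum_conj_sub hm hw hwy hu ?_⟩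
  exact spectrum.mem_resolventSet_of_spectralRadius_lt (by simpa [hzero] using ht)

theorem mem_jacobson_of_spectralRadius_add_smul_bounded
    (h : ∀ b : C, ∃ K : ℝ≥0∞, K ≠ ∞ ∧ ∀ t : ℂ, spectralRadius ℂ (b + t • y) ≤ K) :
    y ∈ Ring.jacobson C := by
  have hconst (b : C) (t : ℂ) : spectralRadius ℂ (b + t • y) = spectralRadius ℂ b := by
    obtain ⟨K, hK, hbound⟩ := h b
    simpa using spectralRadius_apply_eq_of_bounded (f := fun t ↦ b + t • y) (by fun_prop) hK
      hbound t 0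
  have hy : spectralRadius ℂ y = 0 := by simpa using hconst 0 1
  rw [Ring.jacobson_eq_sInf_isMaximal, Ideal.mem_sInf]
  intro m hm
  by_contra hym
  obtain ⟨w, hw, hwy⟩ := exists_mem_mul_sub_one_mem hm hy hym
  obtain ⟨u, hu⟩ := exists_spectralRadius_conj_sub_ne_zero hm.ne_top hw hwy
  refine hu ?_
  have hconj : spectralRadius ℂ (u * y * ↑u⁻¹) = 0 := by
    rw [← hy, spectralRadius, spectralRadius, spectrum.units_conjugate]
  simpa [← sub_eq_add_neg, hconj] using hconst (u * y * ↑u⁻¹) (-1)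

end MaximalLeftIdeals

theorem apply_mem_jacobson_of_spectralRadius_le {A C D : Type*} [AddCommGroup A] [Module ℂ A]
    [Ring D] [Algebra ℂ D] [NormedRing C] [NormedAlgebra ℂ C] [CompleteSpace C]
    (p : A →ₗ[ℂ] D) (S : A →ₗ[ℂ] C) {M : ℝ≥0} (hS : Function.Surjective S)
    (hSp : ∀ x, spectralRadius ℂ (S x) ≤ M * spectralRadius ℂ (p x))
    (hp : ∀ x, spectralRadius ℂ (p x) ≠ ∞) {x : A} (hx : p x = 0) : S x ∈ Ring.jacobson C := by
  refine mem_jacobson_of_spectralRadius_add_smul_bounded fun b ↦ ?_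
  obtain ⟨a, rfl⟩ := hS b
  refine ⟨M * spectralRadius ℂ (p a), ENNReal.mul_ne_top ENNReal.coe_ne_top (hp a), fun t ↦ ?_⟩
  simpa [hx] using hSp (a + t • x)

section NormedQuotient

variable {R : Type*} [SeminormedRing R] (I : Ideal R) [I.IsTwoSided]

theorem norm_quotient_mul_le (x y : R ⧸ I) : ‖x * y‖ ≤ ‖x‖ * ‖y‖ := by
  have hε : ∀ᶠ ε : ℝ in 𝓝[>] 0, ‖x * y‖ ≤ (‖x‖ + ε) * (‖y‖ + ε) := by
    filter_upwards [self_mem_nhdsWithin] with ε hε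
    obtain ⟨a, rfl, ha⟩ : ∃ a, Ideal.Quotient.mk I a = x ∧ ‖a‖ < ‖x‖ + ε :=
      Submodule.Quotient.norm_mk_lt x hε
    obtain ⟨b, rfl, hb⟩ : ∃ b, Ideal.Quotient.mk I b = y ∧ ‖b‖ < ‖y‖ + ε :=
      Submodule.Quotient.norm_mk_lt y hε
    calc _ = ‖Ideal.Quotient.mk I (a * b)‖ := by rw [map_mul]
      _ ≤ ‖a * b‖ := Submodule.Quotient.norm_mk_le I (a * b)
      _ ≤ ‖a‖ * ‖b‖ := norm_mul_le a b
      _ ≤ _ := mul_le_mul ha.le hb.le (norm_nonneg b) ((norm_nonneg a).trans ha.le)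
  have hlim : Tendsto (fun ε : ℝ ↦ (‖x‖ + ε) * (‖y‖ + ε)) (𝓝[>] 0) (𝓝 (‖x‖ * ‖y‖)) := by
    refine tendsto_nhdsWithin_of_tendsto_nhds ?_
    simpa using (by fun_prop : Continuous fun ε : ℝ ↦ (‖x‖ + ε) * (‖y‖ + ε)).tendsto 0
  exact ge_of_tendsto hlim hε

/-- The quotient of a normed ring by a closed two-sided ideal, with the quotient norm. -/
noncomputable abbrev idealQuotientNormedRing [IsClosed (I : Set R)] : NormedRing (R ⧸ I) where
  __ := Submodule.Quotient.normedAddCommGroup I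
  __ := Ideal.Quotient.ring I
  norm_mul_le := norm_quotient_mul_le I

/-- The quotient of a normed algebra by a closed two-sided ideal, with the quotient norm. -/
noncomputable abbrev idealQuotientNormedAlgebra (𝕜 : Type*) [NormedField 𝕜] [NormedAlgebra 𝕜 R]
    [IsClosed (I : Set R)] :
    letI := idealQuotientNormedRing I
    NormedAlgebra 𝕜 (R ⧸ I) :=
  letI := idealQuotientNormedRing I
  { Ideal.Quotient.algebra 𝕜 with
    norm_smul_le := (Submodule.Quotient.normedSpace I 𝕜).norm_smul_le }

end NormedQuotient

theorem exists_linearMap_apply_eq_of_ker_le {R M N P : Type*} [Ring R] [AddCommGroup M]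
    [AddCommGroup N] [AddCommGroup P] [Module R M] [Module R N] [Module R P] {p : M →ₗ[R] N}
    {g : M →ₗ[R] P} (hp : Function.Surjective p) (h : LinearMap.ker p ≤ LinearMap.ker g) :
    ∃ q : N →ₗ[R] P, ∀ x, q (p x) = g x :=
  ⟨(LinearMap.ker p).liftQ g h ∘ₗ (p.quotKerEquivOfSurjective hp).symm, fun x ↦ by simp⟩

theorem spectralRadius_algEquiv_apply {𝕜 A B : Type*} [NormedField 𝕜] [Ring A] [Ring B]
    [Algebra 𝕜 A] [Algebra 𝕜 B] (e : A ≃ₐ[𝕜] B) (a : A) :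
    spectralRadius 𝕜 (e a) = spectralRadius 𝕜 a := by
  rw [spectralRadius, spectralRadius, AlgEquiv.spectrum_eq]

section RingConQuotient

theorem ring_jacobson_eq_bot_of_twoSidedIdeal_jacobson_bot {R : Type*} [Ring R]
    (h : (⊥ : TwoSidedIdeal R).jacobson = ⊥) : Ring.jacobson R = ⊥ := by
  rw [← Ideal.jacobson_bot, ← TwoSidedIdeal.bot_asIdeal, ← TwoSidedIdeal.asIdeal_jacobson, h,
    TwoSidedIdeal.bot_asIdeal]

theorem ringCon_mk'_eq_iff {R : Type*} [Ring R] (I : TwoSidedIdeal R) {x y : R} :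
    I.ringCon.mk' x = I.ringCon.mk' y ↔ x - y ∈ I :=
  (RingCon.eq I.ringCon).trans (I.rel_iff x y)

theorem ringCon_mk'_eq_zero_iff {R : Type*} [Ring R] (I : TwoSidedIdeal R) {x : R} :
    I.ringCon.mk' x = 0 ↔ x ∈ I := by
  rw [← map_zero I.ringCon.mk', ringCon_mk'_eq_iff, sub_zero]

variable {A : Type*} [Ring A] [Algebra ℂ A] (I : TwoSidedIdeal A)

/-- The quotient map onto `A / I`, as a homomorphism of complex algebras for the algebra structure
`TwoSidedIdeal.quotientAlgebra`. -/
noncomputable def quotientMkₐ : A →ₐ[ℂ] I.ringCon.Quotient where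
  toRingHom := I.ringCon.mk'
  commutes' _ := rfl

/-- The identification of the quotient of `A` by the congruence of a two-sided ideal `I` with the
quotient by the left ideal underlying `I`. -/
noncomputable def quotientEquivAsIdeal : I.ringCon.Quotient ≃ₐ[ℂ] A ⧸ I.asIdeal :=
  have hker : I.ringCon = RingCon.ker (Ideal.Quotient.mk I.asIdeal) := by
    ext x y
    rw [I.rel_iff, RingCon.ker_apply, Ideal.Quotient.eq, TwoSidedIdeal.mem_asIdeal]
  AlgEquiv.ofBijective
    { RingCon.lift I.ringCon (Ideal.Quotient.mk I.asIdeal) hker.le with commutes' := fun _ ↦ rfl }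
    (RingCon.lift_bijective_iff.2 ⟨hker, Ideal.Quotient.mk_surjective⟩)

end RingConQuotient

theorem apply_mem_jacobson_ringCon_quotient {A B D : Type*} [AddCommGroup A] [Module ℂ A]
    [Ring D] [Algebra ℂ D] [NormedRing B] [NormedAlgebra ℂ B] [CompleteSpace B]
    {J : TwoSidedIdeal B} (hJ : IsClosed (J : Set B)) (p : A →ₗ[ℂ] D)
    (S : A →ₗ[ℂ] J.ringCon.Quotient) {M : ℝ≥0} (hS : Function.Surjective S)
    (hSp : ∀ x, spectralRadius ℂ (S x) ≤ M * spectralRadius ℂ (p x))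
    (hp : ∀ x, spectralRadius ℂ (p x) ≠ ∞) {x : A} (hx : p x = 0) :
    S x ∈ Ring.jacobson J.ringCon.Quotient := by
  have : IsClosed (J.asIdeal : Set B) := hJ
  let _ := idealQuotientNormedRing J.asIdeal
  let _ := idealQuotientNormedAlgebra J.asIdeal ℂ
  have : CompleteSpace (B ⧸ J.asIdeal) := Submodule.Quotient.completeSpace J.asIdeal
  let e := quotientEquivAsIdeal J
  have hjac : e (S x) ∈ Ring.jacobson (B ⧸ J.asIdeal) :=
    apply_mem_jacobson_of_spectralRadius_le p (e.toLinearMap ∘ₗ S) (e.surjective.comp hS)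
      (fun a ↦ (spectralRadius_algEquiv_apply e (S a)).trans_le (hSp a)) hp hx
  have : RingHomSurjective (e.symm : B ⧸ J.asIdeal →+* J.ringCon.Quotient) := ⟨e.symm.surjective⟩
  simpa using Ring.le_comap_jacobson (e.symm : B ⧸ J.asIdeal →+* J.ringCon.Quotient) hjac

theorem spectralRadius_ringCon_mk'_ne_top {A : Type*} [NormedRing A] [NormedAlgebra ℂ A]
    [CompleteSpace A] (I : TwoSidedIdeal A) (x : A) :
    spectralRadius ℂ (I.ringCon.mk' x) ≠ ∞ := by
  have hle : spectralRadius ℂ (I.ringCon.mk' x) ≤ spectralRadius ℂ x :=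
    biSup_mono fun _ hk ↦ AlgHom.spectrum_apply_subset (quotientMkₐ I) x hk
  refine ((hle.trans (spectrum.spectralRadius_le_pow_nnnorm_pow_one_div ℂ x 0)).trans_lt ?_).ne
  simpa using ENNReal.mul_lt_top ENNReal.coe_lt_top ENNReal.coe_lt_top

theorem exists_linearMap_quotient_apply_mk' {A B : Type*} [Ring A] [Algebra ℂ A] [Ring B]
    [Algebra ℂ B] {I : TwoSidedIdeal A} {J : TwoSidedIdeal B} {T : A →ₗ[ℂ] B}
    (hIJ : ∀ x ∈ I, T x ∈ J) :
    ∃ That : I.ringCon.Quotient →ₗ[ℂ] J.ringCon.Quotient,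
      ∀ x : A, That (I.ringCon.mk' x) = J.ringCon.mk' (T x) :=
  exists_linearMap_apply_eq_of_ker_le (p := (quotientMkₐ I).toLinearMap)
    (g := (quotientMkₐ J).toLinearMap ∘ₗ T) I.ringCon.mk'_surjective fun x hx ↦
      (ringCon_mk'_eq_zero_iff J).2 (hIJ x ((ringCon_mk'_eq_zero_iff I).1 hx))

theorem map_mem_of_essentially_spectrally_bounded {A B : Type*} [Ring A] [Algebra ℂ A]
    [NormedRing B] [NormedAlgebra ℂ B] [CompleteSpace B]
    {I : TwoSidedIdeal A} {J : TwoSidedIdeal B}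
    (hI : ∀ x : A, spectralRadius ℂ (I.ringCon.mk' x) ≠ ∞) (hJclosed : IsClosed (J : Set B))
    (hsemisimple : (⊥ : TwoSidedIdeal J.ringCon.Quotient).jacobson = ⊥) {T : A →ₗ[ℂ] B} {M : ℝ≥0}
    (hbdd : ∀ x : A,
      spectralRadius ℂ (J.ringCon.mk' (T x)) ≤ M * spectralRadius ℂ (I.ringCon.mk' x))
    (hsurj : ∀ y : B, ∃ x : A, y - T x ∈ J) {x : A} (hx : x ∈ I) : T x ∈ J := by
  have hS : Function.Surjective ((quotientMkₐ J).toLinearMap ∘ₗ T) := by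
    refine J.ringCon.mk'_surjective.forall.2 fun y ↦ ?_
    obtain ⟨a, ha⟩ := hsurj y
    exact ⟨a, ((ringCon_mk'_eq_iff J).2 ha).symm⟩
  have hjac := apply_mem_jacobson_ringCon_quotient hJclosed (quotientMkₐ I).toLinearMap _ hS
    hbdd hI ((ringCon_mk'_eq_zero_iff I).2 hx)
  rw [ring_jacobson_eq_bot_of_twoSidedIdeal_jacobson_bot hsemisimple, Ideal.mem_bot] at hjac
  exact (ringCon_mk'_eq_zero_iff J).1 hjac

theorem essentially_spectrally_bounded_iff_general {A B : Type*} [Ring A] [Algebra ℂ A]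
    [NormedRing B] [NormedAlgebra ℂ B] [CompleteSpace B]
    (I : TwoSidedIdeal A) (J : TwoSidedIdeal B)
    (hI : ∀ x : A, spectralRadius ℂ (I.ringCon.mk' x) ≠ ∞) (hJclosed : IsClosed (J : Set B))
    (hsemisimple : (⊥ : TwoSidedIdeal J.ringCon.Quotient).jacobson = ⊥)
    (T : A →ₗ[ℂ] B) :
    ((∃ M : ℝ≥0, ∀ x : A,
        spectralRadius ℂ (J.ringCon.mk' (T x)) ≤ (M : ℝ≥0∞) * spectralRadius ℂ (I.ringCon.mk' x)) ∧
      (∀ y : B, ∃ x : A, y - T x ∈ J)) ↔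
    ((∀ x ∈ I, T x ∈ J) ∧
      ∃ That : I.ringCon.Quotient →ₗ[ℂ] J.ringCon.Quotient,
        (∀ x : A, That (I.ringCon.mk' x) = J.ringCon.mk' (T x)) ∧
        (∃ M : ℝ≥0, ∀ z : I.ringCon.Quotient,
          spectralRadius ℂ (That z) ≤ (M : ℝ≥0∞) * spectralRadius ℂ z) ∧
        Function.Surjective That) := by
  constructor
  · rintro ⟨⟨M, hbdd⟩, hsurj⟩
    have hIJ : ∀ x ∈ I, T x ∈ J := fun x ↦
      map_mem_of_essentially_spectrally_bounded hI hJclosed hsemisimple hbdd hsurj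
    obtain ⟨That, hThat⟩ := exists_linearMap_quotient_apply_mk' hIJ
    refine ⟨hIJ, That, hThat, ⟨M, I.ringCon.mk'_surjective.forall.2 fun x ↦ ?_⟩,
      J.ringCon.mk'_surjective.forall.2 fun y ↦ ?_⟩
    · exact hThat x ▸ hbdd x
    · obtain ⟨x, hx⟩ := hsurj y
      exact ⟨I.ringCon.mk' x, (hThat x).trans ((ringCon_mk'_eq_iff J).2 hx).symm⟩
  · rintro ⟨-, That, hThat, ⟨M, hbdd⟩, hsurj⟩
    refine ⟨⟨M, fun x ↦ hThat x ▸ hbdd _⟩, fun y ↦ ?_⟩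
    obtain ⟨x, hx⟩ := (hsurj.comp I.ringCon.mk'_surjective) (J.ringCon.mk' y)
    exact ⟨x, (ringCon_mk'_eq_iff J).1 (hx.symm.trans (hThat x))⟩

/-- Proposition on essentially spectrally bounded operators:
equivalence of (a) essentially spectrally bounded + surjective modulo `J` with
(b) `T I ⊆ J` and the induced map on the quotients is spectrally bounded and surjective. -/
theorem essentially_spectrally_bounded_iff
    {A B : Type*}
    [NormedRing A] [NormedAlgebra ℂ A] [CompleteSpace A] [NormOneClass A]
    [NormedRing B] [NormedAlgebra ℂ B] [CompleteSpace B] [NormOneClass B]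
    (I : TwoSidedIdeal A) (J : TwoSidedIdeal B)
    (hIclosed : IsClosed (I : Set A)) (hJclosed : IsClosed (J : Set B))
    (hIproper : I ≠ ⊤) (hJproper : J ≠ ⊤)
    (hsemisimple : (⊥ : TwoSidedIdeal J.ringCon.Quotient).jacobson = ⊥)
    (T : A →ₗ[ℂ] B) :
    ((∃ M : ℝ≥0, ∀ x : A,
        spectralRadius ℂ (J.ringCon.mk' (T x)) ≤ (M : ℝ≥0∞) * spectralRadius ℂ (I.ringCon.mk' x)) ∧
      (∀ y : B, ∃ x : A, y - T x ∈ J)) ↔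
    ((∀ x ∈ I, T x ∈ J) ∧
      ∃ That : I.ringCon.Quotient →ₗ[ℂ] J.ringCon.Quotient,
        (∀ x : A, That (I.ringCon.mk' x) = J.ringCon.mk' (T x)) ∧
        (∃ M : ℝ≥0, ∀ z : I.ringCon.Quotient,
          spectralRadius ℂ (That z) ≤ (M : ℝ≥0∞) * spectralRadius ℂ z) ∧
        Function.Surjective That) :=
  essentially_spectrally_bounded_iff_general I J (spectralRadius_ringCon_mk'_ne_top I) hJclosed
    hsemisimple T
end

section
/- Let T : Mₙ(ℂ) → Mₙ(ℂ) be a unital surjective spectrally bounded linear map. Then there exist a Jordan automorphism S of Mₙ(ℂ) and γ ∈ ℂ \ {0} such that Tx = γ·Sx + (1−γ)·τ(x)·1 for all x ∈ Mₙ(ℂ), where τ is the normalized trace. -/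
open scoped ENNReal NNReal

/-!
By Liouville's theorem the traces of the powers of `T x` do not change when `x` moves along an
entire family of similar matrices, so they are similarity invariants of `x`. A linear surjection of
matrix algebras which preserves traces of squares and of cubes preserves squares, because the trace
form is nondegenerate; hence `x ↦ T⁻¹ ((T x) ^ 2)` commutes with similarities. On traceless diagonal
matrices this forces it to be `a x ^ 2 + b τ(x ^ 2) 1`, and as Hermitian matrices are diagonalizable
and span, `(T x) ^ 2 = a T (x ^ 2) + b τ(x ^ 2) 1` for every traceless `x`. After rescaling
`T` on traceless matrices by a suitable `γ⁻¹`, squares are preserved up to a scalar multiple of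
`τ(x ^ 2) - τ(x) ^ 2`. In size at least three this multiple must vanish for `γ = a`; in size two,
where squares of traceless matrices are scalar by Cayley–Hamilton, it vanishes for `γ ^ 2 = a + b`.
-/

/-- `T` is spectrally bounded with constant `M`. -/
def IsSpectrallyBoundedWith {A B : Type*} [Ring A] [Algebra ℂ A] [Ring B] [Algebra ℂ B] (M : ℝ≥0)
    (T : A → B) : Prop :=
  ∀ x, spectralRadius ℂ (T x) ≤ (M : ℝ≥0∞) * spectralRadius ℂ x

section TracePowers

open scoped Matrix.Norms.Operator

variable {ι κ : Type*} [Fintype ι] [DecidableEq ι] [Fintype κ] [DecidableEq κ]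

lemma norm_le_pow_of_mem_spectrum_pow {A : Type*} [Ring A] [Algebra ℂ A] [Nontrivial A]
    [FiniteDimensional ℂ A] {a : A} {R : ℝ≥0} (hR : spectralRadius ℂ a ≤ R) {k : ℕ} {μ : ℂ}
    (hμ : μ ∈ spectrum ℂ (a ^ k)) : ‖μ‖ ≤ R ^ k := by
  rw [spectrum.map_pow_of_nonempty
    (spectrum.nonempty_of_isAlgClosed_of_finiteDimensional ℂ a)] at hμ
  obtain ⟨ν, hν, rfl⟩ := hμ
  have hνR : ‖ν‖₊ ≤ R := ENNReal.coe_le_coe.mp ((le_iSup₂ (α := ℝ≥0∞) ν hν).trans hR)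
  rw [norm_pow]
  gcongr
  exact hνR

lemma norm_trace_pow_le {y : Matrix ι ι ℂ} {R : ℝ≥0} (hR : spectralRadius ℂ y ≤ R) (k : ℕ) :
    ‖(y ^ k).trace‖ ≤ Fintype.card ι * R ^ k := by
  cases isEmpty_or_nonempty ι
  · simp [Matrix.trace]
  rw [Matrix.trace_eq_sum_roots_charpoly]
  calc ‖(y ^ k).charpoly.roots.sum‖
      ≤ ((y ^ k).charpoly.roots.map (‖·‖)).sum := norm_multiset_sum_le _
    _ ≤ ((y ^ k).charpoly.roots.map (‖·‖)).card • (R : ℝ) ^ k := by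
      refine Multiset.sum_le_card_nsmul _ _ fun r hr ↦ ?_
      obtain ⟨μ, hμ, rfl⟩ := Multiset.mem_map.mp hr
      exact norm_le_pow_of_mem_spectrum_pow hR
        (Matrix.mem_spectrum_iff_isRoot_charpoly.mpr (Polynomial.isRoot_of_mem_roots hμ))
    _ ≤ Fintype.card ι * R ^ k := by
      rw [Multiset.card_map, nsmul_eq_mul, ← Matrix.charpoly_natDegree_eq_dim (y ^ k)]
      gcongr
      exact Polynomial.card_roots' _

lemma spectralRadius_conj {A : Type*} [Ring A] [Algebra ℂ A] [IsDedekindFiniteMonoid A]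
    {g h : A} (hgh : g * h = 1) (x : A) : spectralRadius ℂ (g * x * h) = spectralRadius ℂ x := by
  have hspec : spectrum ℂ (g * x * h) = spectrum ℂ x :=
    spectrum.units_conjugate (u := ⟨g, h, hgh, mul_eq_one_symm hgh⟩)
  rw [spectralRadius, hspec, spectralRadius]

lemma trace_map_conj_pow_of_entire {T : Matrix ι ι ℂ →ₗ[ℂ] Matrix κ κ ℂ} {M : ℝ≥0}
    (hT : IsSpectrallyBoundedWith M T)
    {g h : ℂ → Matrix ι ι ℂ} (hg : Differentiable ℂ g) (hh : Differentiable ℂ h)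
    (hgh : ∀ z, g z * h z = 1) (x : Matrix ι ι ℂ) (k : ℕ) (z w : ℂ) :
    (T (g z * x * h z) ^ k).trace = (T (g w * x * h w) ^ k).trace := by
  let T' := LinearMap.toContinuousLinearMap T
  let tr := LinearMap.toContinuousLinearMap (Matrix.traceLinearMap κ ℂ ℂ)
  have hdiff : Differentiable ℂ fun z ↦ tr (T' (g z * x * h z) ^ k) := by fun_prop
  cases isEmpty_or_nonempty ι
  · simp only [Subsingleton.elim (g z * x * h z) (g w * x * h w)]
  refine hdiff.apply_eq_apply_of_bounded (isBounded_iff_forall_norm_le.mpr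
    ⟨Fintype.card κ * ((M * ‖x‖₊ : ℝ≥0) : ℝ) ^ k, ?_⟩) z w
  rintro _ ⟨z, rfl⟩
  refine norm_trace_pow_le ((hT _).trans ?_) k
  rw [spectralRadius_conj (hgh z), ENNReal.coe_mul]
  gcongr
  exact spectrum.spectralRadius_le_nnnorm x

lemma trace_map_transvection_conj_pow {T : Matrix ι ι ℂ →ₗ[ℂ] Matrix κ κ ℂ} {M : ℝ≥0}
    (hT : IsSpectrallyBoundedWith M T)
    {i j : ι} (hij : i ≠ j) (c : ℂ) (x : Matrix ι ι ℂ) (k : ℕ) :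
    (T (Matrix.transvection i j c * x * Matrix.transvection i j (-c)) ^ k).trace =
      (T x ^ k).trace := by
  have hpath (z : ℂ) : Matrix.transvection i j (z * c) = 1 + z • Matrix.single i j c := by
    rw [Matrix.transvection, Matrix.smul_single, smul_eq_mul]
  have hdiff : Differentiable ℂ fun z : ℂ ↦ Matrix.transvection i j (z * c) := by
    simp only [hpath]
    fun_prop
  simpa using trace_map_conj_pow_of_entire hT hdiff (hdiff.comp differentiable_neg)
    (fun z ↦ by simp [Matrix.transvection_mul_transvection_same, hij]) x k 1 0

lemma trace_map_diagonal_conj_pow {T : Matrix ι ι ℂ →ₗ[ℂ] Matrix κ κ ℂ} {M : ℝ≥0}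
    (hT : IsSpectrallyBoundedWith M T)
    {d : ι → ℂ} (hd : ∀ i, d i ≠ 0) (x : Matrix ι ι ℂ) (k : ℕ) :
    (T (Matrix.diagonal d * x * Matrix.diagonal d⁻¹) ^ k).trace = (T x ^ k).trace := by
  let g (z : ℂ) : Matrix ι ι ℂ := Matrix.diagonal fun i ↦ Complex.exp (z * Complex.log (d i))
  have hdiff : Differentiable ℂ g :=
    (LinearMap.toContinuousLinearMap (Matrix.diagonalLinearMap ι ℂ ℂ)).differentiable.comp
      (f := fun z i ↦ Complex.exp (z * Complex.log (d i))) (by fun_prop)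
  have hg0 : g 0 = 1 := by simp [g]
  have hg1 : g 1 = Matrix.diagonal d := by simp [g, Complex.exp_log (hd _)]
  have hg_neg1 : g (-1) = Matrix.diagonal d⁻¹ := by
    simp [g, Complex.exp_neg, Complex.exp_log (hd _), Pi.inv_def]
  simpa only [hg0, hg1, hg_neg1, Function.comp_apply, neg_zero, one_mul, mul_one] using
    trace_map_conj_pow_of_entire hT hdiff (hdiff.comp differentiable_neg)
      (fun z ↦ by simp [g, ← Complex.exp_add]) x k 1 0

lemma trace_map_conj_pow {T : Matrix ι ι ℂ →ₗ[ℂ] Matrix κ κ ℂ} {M : ℝ≥0}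
    (hT : IsSpectrallyBoundedWith M T)
    {g h : Matrix ι ι ℂ} (hgh : g * h = 1) (x : Matrix ι ι ℂ) (k : ℕ) :
    (T (g * x * h) ^ k).trace = (T x ^ k).trace := by
  rw [← Matrix.inv_eq_right_inv hgh]
  have hdet : g.det ≠ 0 := Matrix.det_ne_zero_of_right_inverse hgh
  refine Matrix.diagonal_transvection_induction_of_det_ne_zero
    (fun g ↦ ∀ x, (T (g * x * g⁻¹) ^ k).trace = (T x ^ k).trace) g hdet
    (fun d hd x ↦ ?_) (fun t x ↦ ?_) (fun a b _ _ ha hb x ↦ ?_) x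
  · have hd' : ∀ i, d i ≠ 0 := by
      simpa [Matrix.det_diagonal, Finset.prod_ne_zero_iff] using hd
    have hinv : (Matrix.diagonal d)⁻¹ = Matrix.diagonal d⁻¹ :=
      Matrix.inv_eq_right_inv (by simp [hd'])
    rw [hinv, trace_map_diagonal_conj_pow hT hd']
  · rw [Matrix.inv_eq_right_inv t.mul_inv]
    exact trace_map_transvection_conj_pow hT t.hij t.c x k
  · calc (T (a * b * x * (a * b)⁻¹) ^ k).trace
        = (T (a * (b * x * b⁻¹) * a⁻¹) ^ k).trace := by
          rw [Matrix.mul_inv_rev]; simp only [mul_assoc]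
      _ = (T x ^ k).trace := by rw [ha, hb]

end TracePowers

section Equivariance

variable {ι κ K : Type*} [Fintype ι] [DecidableEq ι] [Fintype κ] [DecidableEq κ] [Field K]

lemma two_mul_trace_mul (a b : Matrix ι ι K) :
    2 * (a * b).trace = ((a + b) ^ 2).trace - (a ^ 2).trace - (b ^ 2).trace := by
  simp only [pow_two, add_mul, mul_add, Matrix.trace_add, Matrix.trace_mul_comm b a]
  ring

lemma six_mul_trace_sq_mul (a b : Matrix ι ι K) :
    6 * (a ^ 2 * b).trace =
      ((a + b) ^ 3).trace - ((a - b) ^ 3).trace - 2 * (b ^ 3).trace := by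
  have hcubes : (a + b) ^ 3 - (a - b) ^ 3 - (2 : K) • b ^ 3 =
      (2 : K) • (a * a * b + a * b * a + b * a * a) := by
    simp only [ofNat_smul_eq_nsmul, smul_add]
    noncomm_ring
  have htrace := congrArg Matrix.trace hcubes
  simp only [Matrix.trace_sub, Matrix.trace_add, Matrix.trace_smul, smul_eq_mul,
    Matrix.trace_mul_cycle a b a, Matrix.trace_mul_cycle b a a] at htrace
  rw [htrace, pow_two]
  ring

lemma map_sq_of_trace_pow_eq [CharZero K] {θ : Matrix ι ι K →ₗ[K] Matrix κ κ K}
    (hθ : Function.Surjective θ) (hsq : ∀ x, (θ x ^ 2).trace = (x ^ 2).trace)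
    (hcube : ∀ x, (θ x ^ 3).trace = (x ^ 3).trace) (x : Matrix ι ι K) :
    θ (x ^ 2) = θ x ^ 2 := by
  have hmul (a b : Matrix ι ι K) : (θ a * θ b).trace = (a * b).trace := by
    refine mul_left_cancel₀ (two_ne_zero (α := K)) ?_
    simp only [two_mul_trace_mul, ← map_add, hsq]
  have hsq_mul (a b : Matrix ι ι K) : (θ a ^ 2 * θ b).trace = (a ^ 2 * b).trace := by
    refine mul_left_cancel₀ (by norm_num : (6 : K) ≠ 0) ?_
    simp only [six_mul_trace_sq_mul, ← map_add, ← map_sub, hcube]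
  refine Matrix.ext_iff_trace_mul_right.mpr fun y ↦ ?_
  obtain ⟨z, rfl⟩ := hθ y
  rw [hmul, hsq_mul]

/-- Maps on square matrices that commute with similarity transformations `x ↦ g * x * g⁻¹`. The
inverse is a second matrix `h` with `g * h = 1`. -/
def SimilarityEquivariant (f : Matrix ι ι K → Matrix ι ι K) : Prop :=
  ∀ ⦃g h : Matrix ι ι K⦄, g * h = 1 → ∀ x, f (g * x * h) = g * f x * h

/-- The square `T⁻¹ ((T x) ^ 2)` of `x` for the Jordan product pulled back along `T`. -/
def pullbackSq {A B : Type*} [AddCommMonoid A] [Module K A] [Semiring B] [Module K B]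
    (T : A ≃ₗ[K] B) (x : A) : A :=
  T.symm (T x ^ 2)

lemma similarityEquivariant_pullbackSq [CharZero K] {T : Matrix ι ι K ≃ₗ[K] Matrix κ κ K}
    (hT : ∀ ⦃g h : Matrix ι ι K⦄, g * h = 1 →
      ∀ x k, (T (g * x * h) ^ k).trace = (T x ^ k).trace) :
    SimilarityEquivariant (pullbackSq T) := by
  intro g h hgh x
  let θ : Matrix κ κ K →ₗ[K] Matrix κ κ K :=
    T.toLinearMap ∘ₗ LinearMap.mulLeftRight K (g, h) ∘ₗ T.symm.toLinearMap
  have hθ (y : Matrix ι ι K) : θ (T y) = T (g * y * h) := by simp [θ]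
  have hθ_surj : Function.Surjective θ := fun y ↦
    ⟨T (h * T.symm y * g), by
      rw [hθ, show g * (h * T.symm y * g) * h = g * h * T.symm y * (g * h) by
        simp only [mul_assoc], hgh, one_mul, mul_one, T.apply_symm_apply]⟩
  have htrace (k : ℕ) (y : Matrix κ κ K) : (θ y ^ k).trace = (y ^ k).trace := by
    obtain ⟨x, rfl⟩ := T.surjective y
    rw [hθ, hT hgh]
  have hsq := map_sq_of_trace_pow_eq hθ_surj (htrace 2) (htrace 3) (T x)
  rw [pullbackSq, ← hθ, ← hsq, ← T.apply_symm_apply (T x ^ 2), hθ, T.symm_apply_apply, pullbackSq]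

namespace SimilarityEquivariant

variable {f : Matrix ι ι K → Matrix ι ι K}

lemma commute_map [Infinite K] (hf : SimilarityEquivariant f) {a x : Matrix ι ι K}
    (hax : Commute a x) : Commute a (f x) := by
  -- Subtracting `a` from a scalar outside its spectrum gives a unit with the same commutant.
  obtain ⟨c, hc⟩ := (Matrix.finite_spectrum a).exists_notMem
  obtain ⟨u, hu⟩ := spectrum.notMem_iff.mp hc
  have hcomm (y : Matrix ι ι K) : Commute (u : Matrix ι ι K) y ↔ Commute a y := by
    rw [hu]
    have hc : Commute (algebraMap K _ c) y := Algebra.commute_algebraMap_left c y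
    exact ⟨fun h ↦ by simpa using hc.sub_left h, hc.sub_left⟩
  have hux : (u : Matrix ι ι K) * x * (u⁻¹ : (Matrix ι ι K)ˣ) = x := by
    rw [((hcomm x).mpr hax).eq, u.mul_inv_cancel_right]
  have hmap := hf u.mul_inv x
  rw [hux] at hmap
  exact (hcomm _).mp (u.eq_mul_inv_iff_mul_eq.mp hmap).symm

lemma exists_map_diagonal [Infinite K] (hf : SimilarityEquivariant f) (d : ι → K) :
    ∃ φ : K → K, f (Matrix.diagonal d) = Matrix.diagonal (φ ∘ d) := by
  have hcomm {i j : ι} (hij : d i = d j) :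
      Commute (Matrix.single i j 1) (f (Matrix.diagonal d)) :=
    hf.commute_map <| by
      ext a b
      simp only [Matrix.mul_diagonal, Matrix.diagonal_mul, Matrix.single_apply]
      grind
  have hfactor : (f (Matrix.diagonal d)).diag.FactorsThrough d := fun i j hij ↦
    Matrix.diag_eq_of_commute_single (hcomm hij)
  refine ⟨Function.extend d (f (Matrix.diagonal d)).diag 0, ?_⟩
  ext i j
  rw [hfactor.extend_comp]
  obtain rfl | hij := eq_or_ne i j
  · simp
  · rw [Matrix.diagonal_apply_ne _ hij, Matrix.row_eq_zero_of_commute_single (hcomm rfl) hij.symm]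

lemma map_submatrix (hf : SimilarityEquivariant f) (σ : Equiv.Perm ι) (x : Matrix ι ι K) :
    f (x.submatrix σ σ) = (f x).submatrix σ σ := by
  let g : Matrix ι ι K := (1 : Matrix ι ι K).submatrix σ id
  let h : Matrix ι ι K := (1 : Matrix ι ι K).submatrix id σ
  have hconj (y : Matrix ι ι K) : g * y * h = y.submatrix σ σ := by
    ext i j
    simp [g, h, Matrix.mul_apply, Matrix.one_apply]
  have hgh : g * h = 1 := by simpa using hconj 1
  simpa only [hconj] using hf hgh x

lemma exists_map_sum_single [Infinite K] (hf : SimilarityEquivariant f) (k : ℕ) :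
    ∃ α β : K, ∀ s : Finset ι, s.card = k →
      f (∑ i ∈ s, Matrix.single i i 1) = α • ∑ i ∈ s, Matrix.single i i 1 + β • 1 := by
  have hdiag (s : Finset ι) : ∑ i ∈ s, Matrix.single i i (1 : K) =
      Matrix.diagonal fun i ↦ if i ∈ s then 1 else 0 := by
    simp [← Matrix.sum_single_eq_diagonal, apply_ite (Matrix.single _ _)]
  simp only [hdiag]
  by_cases h : ∃ s : Finset ι, s.card = k
  swap
  · exact ⟨0, 0, fun s hs ↦ (h ⟨s, hs⟩).elim⟩
  obtain ⟨s, rfl⟩ := h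
  obtain ⟨φ, hφ⟩ := hf.exists_map_diagonal fun i ↦ if i ∈ s then (1 : K) else 0
  refine ⟨φ 1 - φ 0, φ 0, fun t ht ↦ ?_⟩
  obtain ⟨σ, rfl⟩ := Equiv.Perm.exists_map_finset_eq t s ht
  have hsubmatrix : (Matrix.diagonal fun i ↦ if i ∈ t then (1 : K) else 0) =
      (Matrix.diagonal fun i ↦ if i ∈ t.map σ.toEmbedding then 1 else 0).submatrix σ σ := by
    simp [Matrix.submatrix_diagonal_equiv, Function.comp_def]
  rw [hsubmatrix, hf.map_submatrix, hφ, ← Matrix.submatrix_one_equiv σ, ← Matrix.diagonal_one]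
  ext i j
  simp only [Matrix.submatrix_apply, Matrix.add_apply, Matrix.smul_apply, Matrix.diagonal_apply,
    Function.comp_apply, smul_eq_mul]
  split_ifs <;> ring

end SimilarityEquivariant

end Equivariance

lemma add_sq_noncomm {R : Type*} [Semiring R] (x y : R) :
    (x + y) ^ 2 = x ^ 2 + (x * y + y * x) + y ^ 2 := by
  simp only [pow_two, add_mul, mul_add]
  abel

lemma map_mul_add_mul_of_map_sq {A B F : Type*} [Semiring A] [Ring B] [FunLike F A B]
    [AddMonoidHomClass F A B] {T L : F} {x y : A} (hx : T x ^ 2 = L (x ^ 2))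
    (hy : T y ^ 2 = L (y ^ 2)) (hxy : T (x + y) ^ 2 = L ((x + y) ^ 2)) :
    T x * T y + T y * T x = L (x * y + y * x) := by
  rw [map_add, add_sq_noncomm, hx, hy, add_sq_noncomm, map_add, map_add] at hxy
  exact add_left_cancel (add_right_cancel hxy)

lemma two_smul_sum_smul_sq {ι R K : Type*} [Fintype ι] [CommSemiring K] [Semiring R]
    [Algebra K R] (d : ι → K) (q : ι → R) :
    (2 : K) • (∑ i, d i • q i) ^ 2 = ∑ i, ∑ j, (d i * d j) • (q i * q j + q j * q i) := by
  have hswap : ∑ i, ∑ j, (d i * d j) • (q j * q i) = ∑ i, ∑ j, (d i * d j) • (q i * q j) := by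
    rw [Finset.sum_comm]
    simp only [mul_comm]
  simp only [smul_add, Finset.sum_add_distrib, hswap, two_smul, pow_two, Finset.sum_mul_sum,
    smul_mul_smul_comm]

lemma sum_smul_sq_of_sum_eq_zero {ι R K : Type*} [Fintype ι] [Field K] [CharZero K] [Ring R]
    [Algebra K R] {q : ι → R} {α β α' β' : K} (hq : ∀ i, q i ^ 2 = α • q i + β • 1)
    (hq_add : ∀ i j, i ≠ j → (q i + q j) ^ 2 = α' • (q i + q j) + β' • 1)
    {d : ι → K} (hd : ∑ i, d i = 0) :
    (∑ i, d i • q i) ^ 2 =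
      (2 * α - α') • ∑ i, d i ^ 2 • q i + ((2 * β - β' / 2) * ∑ i, d i ^ 2) • 1 := by
  classical
  have hanti (i j : ι) : q i * q j + q j * q i =
      (α' - α) • (q i + q j) + (β' - 2 * β) • (1 : R) +
        if i = j then (2 * (2 * α - α')) • q i + (4 * β - β') • 1 else 0 := by
    obtain rfl | hij := eq_or_ne i j
    · rw [if_pos rfl, ← pow_two, hq]
      module
    · have h := hq_add i j hij
      rw [add_sq_noncomm, hq, hq, add_right_comm] at h
      rw [if_neg hij, ← sub_eq_iff_eq_add'.mpr h.symm]
      module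
  have hcross : ∑ i, ∑ j, (d i * d j) • (q i + q j) = 0 := by
    simp [smul_add, Finset.sum_add_distrib, mul_smul, ← Finset.smul_sum, ← Finset.sum_smul, hd]
  have hconst : ∑ i, ∑ j, d i * d j = 0 := by
    rw [← Finset.sum_mul_sum, hd, zero_mul]
  have hdiag : ∑ i, ∑ j, (d i * d j) •
      (if i = j then (2 * (2 * α - α')) • q i + (4 * β - β') • (1 : R) else 0) =
      (2 * (2 * α - α')) • ∑ i, d i ^ 2 • q i + ((4 * β - β') * ∑ i, d i ^ 2) • 1 := by
    simp [smul_ite, smul_add, Finset.sum_add_distrib, Finset.smul_sum, Finset.mul_sum,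
      Finset.sum_smul, smul_smul, pow_two, mul_comm]
  refine smul_right_injective R (two_ne_zero (α := K)) ?_
  calc (2 : K) • (∑ i, d i • q i) ^ 2
      = (α' - α) • ∑ i, ∑ j, (d i * d j) • (q i + q j) +
          ((β' - 2 * β) * ∑ i, ∑ j, d i * d j) • 1 +
          ((2 * (2 * α - α')) • ∑ i, d i ^ 2 • q i + ((4 * β - β') * ∑ i, d i ^ 2) • 1) := by
        rw [two_smul_sum_smul_sq, ← hdiag]
        simp only [hanti, smul_add, Finset.sum_add_distrib, Finset.smul_sum, Finset.mul_sum,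
          Finset.sum_smul, smul_smul, mul_comm]
    _ = (2 : K) • ((2 * α - α') • ∑ i, d i ^ 2 • q i +
          ((2 * β - β' / 2) * ∑ i, d i ^ 2) • 1) := by
        rw [hcross, hconst]
        module

section TracelessSq

variable {ι K R : Type*} [Fintype ι] [Field K]

/-- The normalized trace of a square matrix. -/
def normTrace : Matrix ι ι K →ₗ[K] K := (Fintype.card ι : K)⁻¹ • Matrix.traceLinearMap ι K K

lemma normTrace_apply (x : Matrix ι ι K) : normTrace x = (Fintype.card ι : K)⁻¹ * x.trace := rfl

variable [DecidableEq ι] [Ring R] [Algebra K R]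

/-- `T` satisfies `(T x) ^ 2 = a T (x ^ 2) + b τ(x ^ 2) 1` for all `x` of trace zero, where `τ` is
the normalized trace. -/
def TracelessSqLaw (T : Matrix ι ι K → R) (a b : K) : Prop :=
  ∀ x, x.trace = 0 → T x ^ 2 = a • T (x ^ 2) + (b * normTrace (x ^ 2)) • 1

lemma exists_pullbackSq_diagonal [CharZero K] [Nonempty ι] {T : Matrix ι ι K ≃ₗ[K] R}
    (hone : T 1 = 1) (hT : SimilarityEquivariant (pullbackSq T)) :
    ∃ a b : K, ∀ d : ι → K, ∑ i, d i = 0 → pullbackSq T (Matrix.diagonal d) =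
      a • Matrix.diagonal d ^ 2 + (b * normTrace (Matrix.diagonal d ^ 2)) • 1 := by
  obtain ⟨α, β, hα⟩ := hT.exists_map_sum_single 1
  obtain ⟨α', β', hα'⟩ := hT.exists_map_sum_single 2
  have hsum (s : Finset ι) {a b : K} (h : pullbackSq T (∑ i ∈ s, Matrix.single i i 1) =
      a • ∑ i ∈ s, Matrix.single i i 1 + b • 1) :
      (∑ i ∈ s, T (Matrix.single i i 1)) ^ 2 = a • ∑ i ∈ s, T (Matrix.single i i 1) + b • 1 := by
    simpa only [pullbackSq, LinearEquiv.symm_apply_eq, map_add, map_smul, map_sum, hone] using h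
  have hT_diagonal (d : ι → K) : T (Matrix.diagonal d) = ∑ i, d i • T (Matrix.single i i 1) := by
    simp_rw [← Matrix.sum_single_eq_diagonal, map_sum, ← map_smul, Matrix.smul_single, smul_eq_mul,
      mul_one]
  refine ⟨2 * α - α', (2 * β - β' / 2) * Fintype.card ι, fun d hd ↦ ?_⟩
  have hcard : (Fintype.card ι : K) ≠ 0 := Nat.cast_ne_zero.mpr Fintype.card_ne_zero
  rw [pullbackSq, T.symm_apply_eq, hT_diagonal, sum_smul_sq_of_sum_eq_zero (α := α) (β := β)
    (α' := α') (β' := β') (fun i ↦ ?_) (fun i j hij ↦ ?_) hd]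
  · simp only [normTrace_apply, Matrix.diagonal_pow, map_add, map_smul, hT_diagonal, hone,
      Matrix.trace_diagonal, Pi.pow_apply, mul_assoc, mul_inv_cancel_left₀ hcard]
  · simpa using hsum {i} (hα {i} (Finset.card_singleton i))
  · simpa only [Finset.sum_pair hij] using hsum {i, j} (hα' {i, j} (Finset.card_pair hij))

end TracelessSq

section Complex

variable {ι : Type*} [Fintype ι] [DecidableEq ι]

lemma SimilarityEquivariant.map_eq_of_isHermitian {f : Matrix ι ι ℂ → Matrix ι ι ℂ}
    (hf : SimilarityEquivariant f) {a b : ℂ}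
    (hdiag : ∀ d : ι → ℂ, ∑ i, d i = 0 → f (Matrix.diagonal d) =
      a • Matrix.diagonal d ^ 2 + (b * normTrace (Matrix.diagonal d ^ 2)) • 1)
    {x : Matrix ι ι ℂ} (hx : x.IsHermitian) (hx0 : x.trace = 0) :
    f x = a • x ^ 2 + (b * normTrace (x ^ 2)) • 1 := by
  let u : Matrix ι ι ℂ := hx.eigenvectorUnitary
  let d : ι → ℂ := RCLike.ofReal ∘ hx.eigenvalues
  have hu : u * star u = 1 := Unitary.coe_mul_star_self _
  have hu' : star u * u = 1 := Unitary.coe_star_mul_self _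
  have hd : ∑ i, d i = 0 := by rw [← hx0, hx.trace_eq_sum_eigenvalues]; rfl
  have hconj : x = u * Matrix.diagonal d * star u := hx.spectral_theorem
  have hsq : x ^ 2 = u * Matrix.diagonal d ^ 2 * star u := by
    rw [hconj]
    exact (map_pow (Unitary.conjStarAlgAut ℂ _ hx.eigenvectorUnitary) (Matrix.diagonal d) 2).symm
  have htrace : normTrace (x ^ 2) = normTrace (Matrix.diagonal d ^ 2) := by
    rw [hsq, normTrace_apply, Matrix.trace_mul_cycle, hu', one_mul, normTrace_apply]
  rw [htrace, hsq, hconj, hf hu, hdiag d hd]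
  simp only [mul_add, add_mul, mul_smul_comm, smul_mul_assoc, mul_one, hu]

lemma map_sq_eq_of_isSelfAdjoint {A B : Type*} [Ring A] [StarRing A] [Algebra ℂ A] [StarModule ℂ A]
    [Ring B] [Algebra ℂ B] {T L : A →ₗ[ℂ] B} {p : Submodule ℂ A} (hp : ∀ x ∈ p, star x ∈ p)
    (h : ∀ x ∈ p, IsSelfAdjoint x → T x ^ 2 = L (x ^ 2)) {x : A} (hx : x ∈ p) :
    T x ^ 2 = L (x ^ 2) := by
  have hy : (realPart x : A) ∈ p := by
    rw [realPart_apply_coe]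
    exact p.smul_of_tower_mem _ (p.add_mem hx (hp x hx))
  have hz : (imaginaryPart x : A) ∈ p := by
    rw [imaginaryPart_apply_coe]
    exact p.smul_mem _ (p.smul_of_tower_mem _ (p.sub_mem hx (hp x hx)))
  have hanti : T (realPart x) * T (imaginaryPart x) + T (imaginaryPart x) * T (realPart x) =
      L ((realPart x : A) * imaginaryPart x + imaginaryPart x * realPart x) :=
    map_mul_add_mul_of_map_sq (h _ hy (realPart x).2) (h _ hz (imaginaryPart x).2)
      (h _ (p.add_mem hy hz) ((realPart x).2.add (imaginaryPart x).2))
  rw [← realPart_add_I_smul_imaginaryPart x, map_add, map_smul, add_sq_noncomm, add_sq_noncomm]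
  simp only [smul_pow, smul_mul_assoc, mul_smul_comm, ← smul_add, map_add, map_smul, ← hanti,
    h _ hy (realPart x).2, h _ hz (imaginaryPart x).2]

lemma exists_tracelessSqLaw {R : Type*} [Ring R] [Algebra ℂ R] [Nonempty ι]
    {T : Matrix ι ι ℂ ≃ₗ[ℂ] R} (hone : T 1 = 1)
    (hT : SimilarityEquivariant (pullbackSq T)) :
    ∃ a b : ℂ, TracelessSqLaw T a b := by
  obtain ⟨a, b, hdiag⟩ := exists_pullbackSq_diagonal hone hT
  let L : Matrix ι ι ℂ →ₗ[ℂ] R := a • T.toLinearMap + (b • normTrace).smulRight 1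
  refine ⟨a, b, fun x hx ↦ map_sq_eq_of_isSelfAdjoint (T := T.toLinearMap) (L := L)
    (p := (Matrix.traceLinearMap ι ℂ ℂ).ker) (fun y hy ↦ ?_) (fun y hy hstar ↦ ?_) hx⟩
  · simpa [Matrix.star_eq_conjTranspose, Matrix.trace_conjTranspose] using hy
  · have hpull := hT.map_eq_of_isHermitian hdiag hstar hy
    simpa [pullbackSq, LinearEquiv.symm_apply_eq, hone, L] using hpull

end Complex

section JordanPart

variable {ι K R : Type*} [Fintype ι] [Field K] [Ring R] [Algebra K R]

/-- For `c ≠ 0`, the map `S` determined by `T x = c • S x + (1 - c) τ(x) • 1`, where `τ` is the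
normalized trace. -/
def jordanPart (T : Matrix ι ι K →ₗ[K] R) (c : K) : Matrix ι ι K →ₗ[K] R :=
  c⁻¹ • (T - (1 - c) • normTrace.smulRight 1)

variable {T : Matrix ι ι K →ₗ[K] R} {c : K}

lemma eq_smul_jordanPart_add (hc : c ≠ 0) (x : Matrix ι ι K) :
    T x = c • jordanPart T c x + ((1 - c) * normTrace x) • 1 := by
  simp [jordanPart, hc, mul_smul]

lemma jordanPart_of_trace_eq_zero {x : Matrix ι ι K} (hx : x.trace = 0) :
    jordanPart T c x = c⁻¹ • T x := by
  simp [jordanPart, normTrace_apply, hx]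

variable [DecidableEq ι] [CharZero K] [Nonempty ι]

lemma normTrace_one : normTrace (1 : Matrix ι ι K) = 1 := by
  simp [normTrace_apply]

lemma jordanPart_one (hone : T 1 = 1) (hc : c ≠ 0) : jordanPart T c 1 = 1 := by
  simp only [jordanPart, LinearMap.smul_apply, LinearMap.sub_apply, LinearMap.smulRight_apply, hone,
    normTrace_one, one_smul]
  match_scalars
  field_simp
  ring

lemma injective_jordanPart (hone : T 1 = 1) (hT : Function.Injective T) (hc : c ≠ 0) :
    Function.Injective (jordanPart T c) := by
  refine (injective_iff_map_eq_zero _).mpr fun x hx ↦ ?_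
  have hTx := eq_smul_jordanPart_add (T := T) hc x
  rw [hx, smul_zero, zero_add, ← hone, ← map_smul] at hTx
  have hscalar := hT hTx
  rw [hscalar, map_smul, jordanPart_one hone hc, ← hone, ← map_smul] at hx
  rw [hscalar]
  exact hT (hx.trans (map_zero T).symm)

lemma exists_traceless_add_smul_one (x : Matrix ι ι K) :
    ∃ y : Matrix ι ι K, y.trace = 0 ∧ x = y + normTrace x • 1 :=
  ⟨x - normTrace x • 1, by simp [normTrace_apply, mul_comm], by simp⟩

lemma jordanPart_sq (hone : T 1 = 1) (hc : c ≠ 0) {b : K}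
    (hT : TracelessSqLaw T c b)
    (x : Matrix ι ι K) : jordanPart T c x ^ 2 = jordanPart T c (x ^ 2) +
      ((c * (1 - c) + b) / c ^ 2 * (normTrace (x ^ 2) - normTrace x ^ 2)) • 1 := by
  obtain ⟨y, hy, hx⟩ := exists_traceless_add_smul_one x
  have hy_sq : jordanPart T c y ^ 2 = jordanPart T c (y ^ 2) +
      ((c * (1 - c) + b) / c ^ 2 * normTrace (y ^ 2)) • 1 := by
    rw [jordanPart_of_trace_eq_zero hy, smul_pow, hT y hy, eq_smul_jordanPart_add hc (y ^ 2)]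
    match_scalars <;> field_simp
  set t := normTrace x
  have hsq : x ^ 2 = y ^ 2 + (2 * t) • y + t ^ 2 • 1 := by
    rw [hx, add_sq_noncomm, smul_pow, one_pow, mul_smul_one, smul_one_mul]
    module
  have hvar : normTrace (x ^ 2) - t ^ 2 = normTrace (y ^ 2) := by
    have hy' : normTrace y = 0 := by rw [normTrace_apply, hy, mul_zero]
    simp [hsq, normTrace_one, hy']
  rw [hvar, hsq, hx]
  simp only [map_add, map_smul, jordanPart_one hone hc, add_sq_noncomm, hy_sq]
  rw [smul_pow, one_pow, mul_smul_one, smul_one_mul]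
  module

end JordanPart

lemma scalar_eq_zero_of_sq_eq {K R : Type*} [Field K] [CharZero K] [Ring R] [Algebra K R] {e r : R}
    {k : K} (he : e ^ 2 = 0) (he0 : e ≠ 0) (hr : r ^ 2 = r + k • 1)
    (her : (e + r) ^ 2 = r + k • 1) : k = 0 := by
  have hanti : e * r + r * e = 0 := by
    rwa [add_sq_noncomm, he, zero_add, ← hr, add_eq_right] at her
  have hleft : e * r ^ 2 = e * r + k • e := by rw [hr, mul_add, mul_smul_one]
  have hright : r ^ 2 * e = r * e + k • e := by rw [hr, add_mul, smul_one_mul]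
  have hcomm : e * r = r * e := by
    have hsq : e * r ^ 2 = r ^ 2 * e := by
      rw [pow_two, ← mul_assoc, eq_neg_of_add_eq_zero_left hanti, neg_mul, mul_assoc,
        eq_neg_of_add_eq_zero_left hanti, mul_neg, neg_neg, mul_assoc]
    exact add_right_cancel (hleft.symm.trans (hsq.trans hright))
  have her0 : e * r = 0 := by
    rw [← hcomm, ← two_smul K] at hanti
    exact (smul_eq_zero.mp hanti).resolve_left two_ne_zero
  rw [pow_two, ← mul_assoc, her0, zero_mul, zero_add, eq_comm, smul_eq_zero] at hleft
  exact hleft.resolve_right he0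

section Scaling

variable {ι κ K R : Type*} [Fintype ι] [DecidableEq ι] [Fintype κ] [DecidableEq κ] [Field K]
  [CharZero K] [Ring R] [Algebra K R]

lemma coeff_eq_zero_of_sq_eq (hcard : 2 < Fintype.card ι)
    {S : Matrix ι ι K →ₗ[K] R} (hS : Function.Injective S) {c : K}
    (hsq : ∀ x, S x ^ 2 = S (x ^ 2) + (c * (normTrace (x ^ 2) - normTrace x ^ 2)) • 1) :
    c = 0 := by
  obtain ⟨i, j, k, hij, hik, hjk⟩ := Fintype.two_lt_card_iff.mp hcard
  set e : Matrix ι ι K := Matrix.single i j 1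
  set p : Matrix ι ι K := Matrix.single k k 1
  have he : e ^ 2 = 0 := by simp [e, pow_two, hij.symm]
  have hp : p ^ 2 = p := by simp [p, pow_two]
  have hep : (e + p) ^ 2 = p := by simp [add_sq_noncomm, he, hp, e, p, hjk, hik.symm]
  have hτe : normTrace e = 0 := by simp [normTrace_apply, e, hij]
  have hτp : normTrace p = (Fintype.card ι : K)⁻¹ := by simp [normTrace_apply, p]
  have he0 : e ≠ 0 := fun h ↦ one_ne_zero (α := K) (by simpa [e] using congrFun₂ h i j)
  have hSe := hsq e
  have hSp := hsq p
  have hSep := hsq (e + p)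
  rw [he, hτe] at hSe
  rw [hp, hτp] at hSp
  rw [hep, map_add, map_add, hτe, hτp, zero_add] at hSep
  have hvar := scalar_eq_zero_of_sq_eq (by simpa using hSe) (by simpa using hS.ne he0) hSp hSep
  have hn : (Fintype.card ι : K)⁻¹ - (Fintype.card ι : K)⁻¹ ^ 2 ≠ 0 := by
    have hn0 : (Fintype.card ι : K) ≠ 0 := Nat.cast_ne_zero.mpr (by omega)
    have hn1 : (Fintype.card ι : K) ≠ 1 := Nat.cast_ne_one.mpr (by omega)
    rw [pow_two, ← mul_one_sub]
    simp [hn0, sub_eq_zero, eq_comm (a := (1 : K)), hn1]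
  exact (mul_eq_zero.mp hvar).resolve_right hn

lemma exists_traceless_map_eq_sub [Nonempty ι] {T : Matrix ι ι K →ₗ[K] R} (hone : T 1 = 1)
    (hsurj : Function.Surjective T) (y : R) :
    ∃ (x : Matrix ι ι K) (t : K), x.trace = 0 ∧ T x = y - t • 1 := by
  obtain ⟨z, rfl⟩ := hsurj y
  obtain ⟨x, hx, hxz⟩ := exists_traceless_add_smul_one z
  refine ⟨x, normTrace z, hx, ?_⟩
  rw [eq_sub_iff_add_eq, ← hone, ← map_smul, ← map_add, ← hxz]

lemma coeff_ne_zero_of_two_lt_card [Nonempty ι] (hcard : 2 < Fintype.card κ)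
    {T : Matrix ι ι K →ₗ[K] Matrix κ κ K} (hone : T 1 = 1) (hsurj : Function.Surjective T) {a b : K}
    (hT : TracelessSqLaw T a b) : a ≠ 0 := by
  rintro rfl
  obtain ⟨i, j, k, hij, hik, hjk⟩ := Fintype.two_lt_card_iff.mp hcard
  obtain ⟨x, t, hx, hTx⟩ :=
    exists_traceless_map_eq_sub hone hsurj (Matrix.single i j 1 + Matrix.single j k 1)
  have hentry := congrFun₂ (hT x hx) i k
  rw [hTx, zero_smul, zero_add] at hentry
  simp [pow_two, sub_mul, mul_sub, add_mul, mul_add, hik, hjk, hij.symm, hik.symm,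
    hjk.symm] at hentry

lemma traceless_sq_of_card_eq_two (hcard : Fintype.card ι = 2) {x : Matrix ι ι K}
    (hx : x.trace = 0) : x ^ 2 = normTrace (x ^ 2) • 1 := by
  have hscalar : x ^ 2 = (-x.det) • 1 := by
    have h := x.aeval_self_charpoly
    rw [x.charpoly_of_card_eq_two hcard, hx] at h
    simpa [Algebra.algebraMap_eq_smul_one, add_eq_zero_iff_eq_neg] using h
  have : Nonempty ι := Fintype.card_pos_iff.mp (by omega)
  rw [hscalar, map_smul, normTrace_one, smul_eq_mul, mul_one]

lemma map_traceless_sq_of_card_eq_two (hcard : Fintype.card ι = 2)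
    {T : Matrix ι ι K →ₗ[K] R} (hone : T 1 = 1) {x : Matrix ι ι K} (hx : x.trace = 0) :
    T (x ^ 2) = normTrace (x ^ 2) • 1 := by
  rw [← hone, ← map_smul, ← traceless_sq_of_card_eq_two hcard hx]

lemma coeff_add_ne_zero_of_card_eq_two [Nontrivial κ] (hcard : Fintype.card ι = 2)
    {T : Matrix ι ι K →ₗ[K] Matrix κ κ K} (hone : T 1 = 1) (hsurj : Function.Surjective T) {a b : K}
    (hT : TracelessSqLaw T a b) :
    a + b ≠ 0 := by
  intro hab
  have : Nonempty ι := Fintype.card_pos_iff.mp (by omega)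
  obtain ⟨i, j, hij⟩ := exists_pair_ne κ
  obtain ⟨x, t, hx, hTx⟩ := exists_traceless_map_eq_sub hone hsurj (Matrix.single i i 1)
  have hsq : (Matrix.single i i 1 - t • 1) ^ 2 = (0 : Matrix κ κ K) := by
    rw [← hTx, hT x hx, map_traceless_sq_of_card_eq_two hcard hone hx, smul_smul, ← add_smul,
      ← add_mul, hab, zero_mul, zero_smul]
  have ht : t = 0 := by
    simpa [pow_two, sub_mul, mul_sub, hij, hij.symm] using congrFun₂ hsq j j
  simpa [pow_two, ht] using congrFun₂ hsq i i

lemma exists_jordanPart_sq_of_two_lt_card (hcard : 2 < Fintype.card ι)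
    {T : Matrix ι ι K →ₗ[K] Matrix ι ι K} (hone : T 1 = 1) (hsurj : Function.Surjective T) {a b : K}
    (hT : TracelessSqLaw T a b) :
    ∃ γ ≠ 0, ∀ x, jordanPart T γ x ^ 2 = jordanPart T γ (x ^ 2) := by
  have : Nonempty ι := Fintype.card_pos_iff.mp (by omega)
  have hinj : Function.Injective T := LinearMap.injective_iff_surjective.mpr hsurj
  have ha := coeff_ne_zero_of_two_lt_card hcard hone hsurj hT
  have hsq := jordanPart_sq hone ha hT
  have hcoeff := coeff_eq_zero_of_sq_eq hcard (injective_jordanPart hone hinj ha) hsq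
  exact ⟨a, ha, fun x ↦ by rw [hsq, hcoeff, zero_mul, zero_smul, add_zero]⟩

lemma exists_jordanPart_sq_of_card_eq_two [IsAlgClosed K] [Nontrivial κ]
    (hcard : Fintype.card ι = 2) {T : Matrix ι ι K →ₗ[K] Matrix κ κ K} (hone : T 1 = 1)
    (hsurj : Function.Surjective T) {a b : K}
    (hT : TracelessSqLaw T a b) :
    ∃ γ ≠ 0, ∀ x, jordanPart T γ x ^ 2 = jordanPart T γ (x ^ 2) := by
  have : Nonempty ι := Fintype.card_pos_iff.mp (by omega)
  obtain ⟨γ, hγ⟩ := IsAlgClosed.exists_pow_nat_eq (a + b) two_pos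
  have hγ0 : γ ≠ 0 := by
    rintro rfl
    exact coeff_add_ne_zero_of_card_eq_two hcard hone hsurj hT (by simp [← hγ])
  have hTγ (x : Matrix ι ι K) (hx : x.trace = 0) :
      T x ^ 2 = γ • T (x ^ 2) + ((γ ^ 2 - γ) * normTrace (x ^ 2)) • 1 := by
    rw [hT x hx, map_traceless_sq_of_card_eq_two hcard hone hx, hγ]
    module
  refine ⟨γ, hγ0, fun x ↦ ?_⟩
  rw [jordanPart_sq hone hγ0 hTγ,
    show γ * (1 - γ) + (γ ^ 2 - γ) = 0 by ring, zero_div, zero_mul, zero_smul, add_zero]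

end Scaling

lemma exists_jordanPart_sq {ι : Type*} [Fintype ι] [DecidableEq ι] [Nontrivial ι]
    {T : Matrix ι ι ℂ →ₗ[ℂ] Matrix ι ι ℂ} (hone : T 1 = 1) (hsurj : Function.Surjective T) {M : ℝ≥0}
    (hT : IsSpectrallyBoundedWith M T) :
    ∃ γ ≠ 0, ∀ x, jordanPart T γ x ^ 2 = jordanPart T γ (x ^ 2) := by
  let e := LinearEquiv.ofBijective T ⟨LinearMap.injective_iff_surjective.mpr hsurj, hsurj⟩
  have hequiv : SimilarityEquivariant (pullbackSq e) :=
    similarityEquivariant_pullbackSq fun _ _ hgh ↦ trace_map_conj_pow hT hgh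
  obtain ⟨a, b, hab⟩ := exists_tracelessSqLaw (T := e) hone hequiv
  obtain hcard | hcard := (Nat.succ_le_of_lt (Fintype.one_lt_card (α := ι))).eq_or_lt
  · exact exists_jordanPart_sq_of_card_eq_two hcard.symm hone hsurj hab
  · exact exists_jordanPart_sq_of_two_lt_card hcard hone hsurj hab

theorem spectrally_bounded_canonical_form_general {ι : Type*} [Fintype ι] [DecidableEq ι]
    (T : Matrix ι ι ℂ →ₗ[ℂ] Matrix ι ι ℂ) (hone : T 1 = 1) (hsurj : Function.Surjective T)
    (M : ℝ≥0) (hsb : ∀ x, spectralRadius ℂ (T x) ≤ (M : ℝ≥0∞) * spectralRadius ℂ x) :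
    ∃ S : Matrix ι ι ℂ →ₗ[ℂ] Matrix ι ι ℂ, ∃ γ : ℂ,
      γ ≠ 0 ∧ Function.Bijective S ∧
      (∀ x y, S (x * y + y * x) = S x * S y + S y * S x) ∧
      ∀ x, T x = γ • S x +
        ((1 - γ) * ((Fintype.card ι : ℂ)⁻¹ * Matrix.trace x)) • (1 : Matrix ι ι ℂ) := by
  obtain hι | hι := subsingleton_or_nontrivial ι
  · have hT (x : Matrix ι ι ℂ) : T x = x := by
      have hscalar : x = x.trace • 1 := by
        ext i j
        obtain rfl := Subsingleton.elim i j
        simp [Matrix.trace, Fintype.sum_subsingleton _ i]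
      rw [hscalar, map_smul, hone]
    exact ⟨.id, 1, one_ne_zero, Function.bijective_id, fun _ _ ↦ rfl, fun x ↦ by simp [hT]⟩
  obtain ⟨γ, hγ, hsq⟩ := exists_jordanPart_sq hone hsurj hsb
  have hinj : Function.Injective (jordanPart T γ) :=
    injective_jordanPart hone (LinearMap.injective_iff_surjective.mpr hsurj) hγ
  exact ⟨jordanPart T γ, γ, hγ, ⟨hinj, LinearMap.injective_iff_surjective.mp hinj⟩,
    fun x y ↦ (map_mul_add_mul_of_map_sq (hsq x) (hsq y) (hsq (x + y))).symm,
    eq_smul_jordanPart_add hγ⟩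

/-- Every unital surjective spectrally bounded linear map on `Mₙ(ℂ)` has the canonical form
`Tx = γ Sx + (1-γ) τ(x) 1` with `S` a Jordan automorphism, `γ ≠ 0` and `τ` the normalised
trace. -/
theorem spectrally_bounded_canonical_form
    {n : ℕ} (hn : 1 ≤ n)
    (T : Matrix (Fin n) (Fin n) ℂ →ₗ[ℂ] Matrix (Fin n) (Fin n) ℂ)
    (hone : T 1 = 1) (hsurj : Function.Surjective T)
    (M : ℝ≥0) (hsb : ∀ x, spectralRadius ℂ (T x) ≤ (M : ℝ≥0∞) * spectralRadius ℂ x) :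
    ∃ S : Matrix (Fin n) (Fin n) ℂ →ₗ[ℂ] Matrix (Fin n) (Fin n) ℂ, ∃ γ : ℂ,
      γ ≠ 0 ∧ Function.Bijective S ∧
      (∀ x y, S (x * y + y * x) = S x * S y + S y * S x) ∧
      ∀ x, T x = γ • S x +
        ((1 - γ) * ((n : ℂ)⁻¹ * Matrix.trace x)) • (1 : Matrix (Fin n) (Fin n) ℂ) := by
  simpa only [Fintype.card_fin] using spectrally_bounded_canonical_form_general T hone hsurj M hsb
end

section
/- For n ≥ 1, every unital spectral isometry T from Mₙ(ℂ) into itself (i.e., linear with T1 = 1 and r(Tx) = r(x) for all x) is a Jordan automorphism. -/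
/-!
A unital spectral isometry `T` preserves the peripheral spectrum: if `σ(x)` lies in the disc of
radius `‖z‖`, then `z ∈ σ(x)` exactly when `r(z + x) = 2‖z‖`. Hence, if `x` is normal with `n`
distinct eigenvalues on the unit circle, `T x` has the same `n` eigenvalues, and
`tr (T x)ᵏ = tr xᵏ`. For fixed `k` both traces are polynomial in `x`, so the identity propagates
from unimodular to arbitrary diagonal matrices, thence to Hermitian ones by unitary conjugation,
and from Hermitian matrices to all matrices. Polarizing the cases `k = 2` and `k = 3` gives
`tr (T x T y) = tr (x y)` and `tr (T x T x T y) = tr (x x y)`. Since the trace form is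
nondegenerate, the first identity makes `T` bijective and the two together give
`T (x x) = T x T x`.
-/

section PeripheralSpectrum

open scoped ENNReal

variable {A B : Type*} [NormedRing A] [NormedAlgebra ℂ A] [CompleteSpace A] [Nontrivial A]
  [NormedRing B] [NormedAlgebra ℂ B] [CompleteSpace B] [Nontrivial B]

theorem mem_spectrum_iff_le_spectralRadius_algebraMap_add {a : A} {z : ℂ}
    (ha : spectralRadius ℂ a ≤ ‖z‖₊) :
    z ∈ spectrum ℂ a ↔ (‖z + z‖₊ : ℝ≥0∞) ≤ spectralRadius ℂ (algebraMap ℂ A z + a) := by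
  constructor
  · exact fun hz ↦ le_iSup₂ (α := ℝ≥0∞) (z + z) (spectrum.add_mem_add_iff.mpr hz)
  · intro hz
    obtain ⟨u, hu, hur⟩ := spectrum.exists_nnnorm_eq_spectralRadius (algebraMap ℂ A z + a)
    obtain ⟨w, rfl⟩ : ∃ w, w + z = u := ⟨u - z, sub_add_cancel u z⟩
    rw [spectrum.add_mem_add_iff] at hu
    have hwz : ‖w‖ ≤ ‖z‖ := by exact_mod_cast (le_iSup₂ (α := ℝ≥0∞) w hu).trans ha
    have hzw : ‖z + z‖ ≤ ‖w + z‖ := by exact_mod_cast hz.trans_eq hur.symm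
    rw [SameRay.rfl.norm_add] at hzw
    have htri : ‖w + z‖ ≤ ‖w‖ + ‖z‖ := norm_add_le w z
    have heq : w = z := eq_of_norm_eq_of_norm_add_eq (by linarith) (by linarith)
    rwa [← heq]

theorem mem_spectrum_map_iff_of_spectralRadius_map_eq (T : A →ₗ[ℂ] B) (hone : T 1 = 1)
    {a : A} {z : ℂ} (ha : spectralRadius ℂ a ≤ ‖z‖₊)
    (hTa : spectralRadius ℂ (T a) = spectralRadius ℂ a)
    (hadd : spectralRadius ℂ (T (algebraMap ℂ A z + a)) =
      spectralRadius ℂ (algebraMap ℂ A z + a)) :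
    z ∈ spectrum ℂ (T a) ↔ z ∈ spectrum ℂ a := by
  have hT : T (algebraMap ℂ A z + a) = algebraMap ℂ B z + T a := by
    simp only [map_add, Algebra.algebraMap_eq_smul_one, map_smul, hone]
  rw [mem_spectrum_iff_le_spectralRadius_algebraMap_add ha,
    mem_spectrum_iff_le_spectralRadius_algebraMap_add (hTa.trans_le ha), ← hT, hadd]

end PeripheralSpectrum

section NormalElements

theorem isStarNormal_algebraMap_add {R A : Type*} [CommSemiring R] [StarRing R] [Semiring A]
    [StarRing A] [Algebra R A] [StarModule R A] {a : A} (ha : IsStarNormal a) (r : R) :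
    IsStarNormal (algebraMap R A r + a) := by
  rw [isStarNormal_iff, star_add, ← algebraMap_star_comm]
  have hcomm (s : R) (x : A) : Commute (algebraMap R A s) x := Algebra.commutes s x
  exact (hcomm (star r) _).add_left ((hcomm r _).symm.add_right ha.star_comm_self)

theorem isStarNormal_diagonal {n R : Type*} [Fintype n] [DecidableEq n] [CommSemiring R]
    [StarRing R] (d : n → R) : IsStarNormal (Matrix.diagonal d) := by
  rw [isStarNormal_iff, Matrix.star_eq_conjTranspose, Matrix.diagonal_conjTranspose]
  exact Matrix.commute_diagonal _ _

end NormalElements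

section InfiniteSets

theorem exists_infinite_sets_forall_injective (ι X : Type*) [Countable ι] [Infinite X] :
    ∃ s : ι → Set X, (∀ i, (s i).Infinite) ∧
      ∀ z : ι → X, (∀ i, z i ∈ s i) → Function.Injective z := by
  obtain ⟨e, he⟩ := exists_injective_nat ι
  let f := Infinite.natEmbedding X
  refine ⟨fun i ↦ Set.range fun m ↦ f (Nat.pair (e i) m), fun i ↦ ?_, fun z hz i j hij ↦ ?_⟩
  · exact Set.infinite_range_of_injective fun a b hab ↦ (Nat.pair_eq_pair.mp (f.injective hab)).2
  · obtain ⟨a, ha⟩ := hz i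
    obtain ⟨b, hb⟩ := hz j
    have hpair : Nat.pair (e i) a = Nat.pair (e j) b :=
      f.injective ((ha.trans hij).trans hb.symm)
    exact he (Nat.pair_eq_pair.mp hpair).1

instance : Infinite Circle :=
  have : Nontrivial Circle := ⟨1, -1, fun h ↦ by
    have hcoe : (1 : ℂ) = -1 := congrArg Subtype.val h
    norm_num at hcoe⟩
  PreconnectedSpace.infinite

end InfiniteSets

open Matrix

section TracePowers

variable {n : Type*} [Fintype n] [DecidableEq n]

theorem exists_units_conj_diagonal_of_injective {K : Type*} [Field K] (A : Matrix n n K)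
    {d : n → K} (hinj : Function.Injective d) (hd : ∀ i, d i ∈ spectrum K A) :
    ∃ P : (Matrix n n K)ˣ, A = P * diagonal d * (P⁻¹ : (Matrix n n K)ˣ) := by
  have heig (i : n) : Module.End.HasEigenvalue (toLin' A) (d i) := by
    rw [Module.End.hasEigenvalue_iff_mem_spectrum, spectrum_toLin']
    exact hd i
  choose v hv using fun i ↦ (heig i).exists_hasEigenvector
  have hindep : LinearIndependent K (of v)ᵀ.col :=
    Module.End.eigenvectors_linearIndependent' _ d hinj v hv
  obtain ⟨P, hP⟩ := linearIndependent_cols_iff_isUnit.mp hindep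
  refine ⟨P, (Units.eq_mul_inv_iff_mul_eq P).mpr ?_⟩
  ext i j
  have hAv := congrFun (hv j).apply_eq_smul i
  rw [toLin'_apply, Pi.smul_apply, smul_eq_mul] at hAv
  rw [mul_diagonal, hP, mul_comm]
  exact hAv

theorem trace_pow_eq_sum_of_injective {K : Type*} [Field K] (A : Matrix n n K) {d : n → K}
    (hinj : Function.Injective d) (hd : ∀ i, d i ∈ spectrum K A) (k : ℕ) :
    (A ^ k).trace = ∑ i, d i ^ k := by
  obtain ⟨P, rfl⟩ := exists_units_conj_diagonal_of_injective A hinj hd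
  rw [Units.conj_pow, trace_units_conj, diagonal_pow, trace_diagonal]
  rfl

theorem exists_mvPolynomial_eval_eq_trace_pow {σ R : Type*} [Finite σ] [CommSemiring R]
    (f : (σ → R) →ₗ[R] Matrix n n R) (k : ℕ) :
    ∃ p : MvPolynomial σ R, ∀ z, MvPolynomial.eval z p = (f z ^ k).trace := by
  classical
  have := Fintype.ofFinite σ
  let M : Matrix n n (MvPolynomial σ R) :=
    ∑ i, (MvPolynomial.X i : MvPolynomial σ R) •
      (f fun j ↦ if i = j then 1 else 0).map MvPolynomial.C
  have hM (z : σ → R) : (MvPolynomial.eval z).mapMatrix M = f z := by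
    rw [f.pi_apply_eq_sum_univ z]
    ext a b
    simp [M, Matrix.sum_apply]
  refine ⟨(M ^ k).trace, fun z ↦ ?_⟩
  rw [← hM, ← map_pow]
  exact AddMonoidHom.map_trace (MvPolynomial.eval z) _

theorem trace_pow_eq_of_infinite_box {σ R : Type*} [Finite σ] [CommRing R] [IsDomain R]
    (f g : (σ → R) →ₗ[R] Matrix n n R) {s : σ → Set R} (hs : ∀ i, (s i).Infinite) {k : ℕ}
    (h : ∀ z, (∀ i, z i ∈ s i) → (f z ^ k).trace = (g z ^ k).trace) (z : σ → R) :
    (f z ^ k).trace = (g z ^ k).trace := by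
  obtain ⟨p, hp⟩ := exists_mvPolynomial_eval_eq_trace_pow f k
  obtain ⟨q, hq⟩ := exists_mvPolynomial_eval_eq_trace_pow g k
  have hpq : p = q := MvPolynomial.funext_set s hs fun w hw ↦ by
    rw [hp, hq, h w fun i ↦ hw i trivial]
  rw [← hp, hpq, hq]

open scoped ComplexStarModule in
theorem trace_pow_eq_of_forall_isSelfAdjoint {E : Type*} [AddCommGroup E] [Module ℂ E]
    [StarAddMonoid E] [StarModule ℂ E] (f g : E →ₗ[ℂ] Matrix n n ℂ) {k : ℕ}
    (h : ∀ a, IsSelfAdjoint a → (f a ^ k).trace = (g a ^ k).trace) (x : E) :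
    (f x ^ k).trace = (g x ^ k).trace := by
  let p : (Fin 2 → ℂ) →ₗ[ℂ] E := Fintype.linearCombination ℂ ![(ℜ x : E), (ℑ x : E)]
  have hp (z : Fin 2 → ℂ) : p z = z 0 • (ℜ x : E) + z 1 • (ℑ x : E) := by
    simp [p, Fintype.linearCombination_apply]
  have hx : p ![1, Complex.I] = x := by simp [hp, realPart_add_I_smul_imaginaryPart]
  rw [← hx]
  refine trace_pow_eq_of_infinite_box (f ∘ₗ p) (g ∘ₗ p) (s := fun _ ↦ Set.range ((↑) : ℝ → ℂ))
    (fun _ ↦ Set.infinite_range_of_injective Complex.ofReal_injective) (fun z hz ↦ h _ ?_) _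
  have hreal (i : Fin 2) : IsSelfAdjoint (z i) := by
    obtain ⟨r, hr⟩ := hz i
    exact hr ▸ Complex.conj_ofReal r
  rw [hp]
  exact ((hreal 0).smul (ℜ x).2).add ((hreal 1).smul (ℑ x).2)

end TracePowers

section SpectralIsometry

variable {n : Type*} [Fintype n] [DecidableEq n] (T : Matrix n n ℂ →ₗ[ℂ] Matrix n n ℂ)
  (hone : T 1 = 1) (hiso : ∀ x, IsStarNormal x → spectralRadius ℂ (T x) = spectralRadius ℂ x)

include hone hiso

attribute [local instance] Matrix.linftyOpNormedRing Matrix.linftyOpNormedAlgebra in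
theorem trace_pow_map_of_isStarNormal_of_injective {x : Matrix n n ℂ} (hx : IsStarNormal x)
    {d : n → ℂ} (hinj : Function.Injective d) (hd : ∀ i, d i ∈ spectrum ℂ x)
    (hnorm : ∀ i, spectralRadius ℂ x ≤ ‖d i‖₊) (k : ℕ) :
    (T x ^ k).trace = (x ^ k).trace := by
  have hTd (i : n) : d i ∈ spectrum ℂ (T x) := by
    have : Nonempty n := ⟨i⟩
    exact (mem_spectrum_map_iff_of_spectralRadius_map_eq T hone (hnorm i) (hiso x hx)
      (hiso _ (isStarNormal_algebraMap_add hx (d i)))).mpr (hd i)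
  rw [trace_pow_eq_sum_of_injective (T x) hinj hTd, trace_pow_eq_sum_of_injective x hinj hd]

theorem trace_pow_map_starAlgEquiv_diagonal (φ : Matrix n n ℂ ≃⋆ₐ[ℂ] Matrix n n ℂ) (d : n → ℂ)
    (k : ℕ) : (T (φ (diagonal d)) ^ k).trace = (φ (diagonal d) ^ k).trace := by
  obtain ⟨s, hs, hs_inj⟩ := exists_infinite_sets_forall_injective n Circle
  let D : (n → ℂ) →ₗ[ℂ] Matrix n n ℂ := φ.toAlgEquiv.toLinearMap ∘ₗ diagonalLinearMap n ℂ ℂ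
  refine trace_pow_eq_of_infinite_box (T ∘ₗ D) D (s := fun i ↦ (↑) '' s i)
    (fun i ↦ (hs i).image Subtype.val_injective.injOn) (fun z hz ↦ ?_) d
  choose c hc hcz using hz
  have hinj : Function.Injective z :=
    funext hcz ▸ Subtype.val_injective.comp (hs_inj c hc)
  have hnorm (i : n) : ‖z i‖₊ = 1 := by
    ext
    rw [← hcz, coe_nnnorm, Circle.norm_coe, NNReal.coe_one]
  have hspec : spectrum ℂ (φ (diagonal z)) = Set.range z := by
    rw [AlgEquiv.spectrum_eq φ, spectrum_diagonal]
  have hradius (i : n) : spectralRadius ℂ (φ (diagonal z)) ≤ ‖z i‖₊ := by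
    refine iSup₂_le fun w hw ↦ ?_
    obtain ⟨j, rfl⟩ := hspec ▸ hw
    rw [hnorm, hnorm]
  exact trace_pow_map_of_isStarNormal_of_injective T hone hiso ((isStarNormal_diagonal z).map φ)
    hinj (fun i ↦ hspec ▸ Set.mem_range_self i) hradius k

theorem trace_pow_map (k : ℕ) (x : Matrix n n ℂ) : (T x ^ k).trace = (x ^ k).trace := by
  refine trace_pow_eq_of_forall_isSelfAdjoint T LinearMap.id (fun a ha ↦ ?_) x
  have ha' : a.IsHermitian := ha
  rw [ha'.spectral_theorem]
  exact trace_pow_map_starAlgEquiv_diagonal T hone hiso _ _ k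

end SpectralIsometry

section Polarization

variable {m n R : Type*} [Fintype m] [DecidableEq m] [Fintype n] [DecidableEq n] [CommRing R]

theorem trace_add_sq (a b : Matrix n n R) :
    ((a + b) ^ 2).trace = (a ^ 2).trace + 2 * (a * b).trace + (b ^ 2).trace := by
  simp only [sq, add_mul, mul_add, trace_add, trace_mul_comm b a]
  ring

theorem trace_add_cube_sub_trace_sub_cube (a b : Matrix n n R) :
    ((a + b) ^ 3).trace - ((a - b) ^ 3).trace = 6 * (a * a * b).trace + 2 * (b ^ 3).trace := by
  have hexpand : (a + b) ^ 3 - (a - b) ^ 3 =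
      (2 : R) • (a * a * b + a * b * a + b * a * a + b ^ 3) := by
    rw [two_smul]
    noncomm_ring
  rw [← trace_sub, hexpand]
  simp only [trace_smul, trace_add, trace_mul_cycle b a a, trace_mul_cycle a b a, smul_eq_mul]
  ring

variable {F : Type*} [FunLike F (Matrix m m R) (Matrix n n R)]
  [AddMonoidHomClass F (Matrix m m R) (Matrix n n R)] (T : F)

theorem trace_map_mul_map_of_trace_map_sq [IsDomain R] (h2 : (2 : R) ≠ 0)
    (hsq : ∀ x, (T x ^ 2).trace = (x ^ 2).trace) (x y : Matrix m m R) :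
    (T x * T y).trace = (x * y).trace := by
  have h := hsq (x + y)
  rw [map_add, trace_add_sq, trace_add_sq, hsq, hsq] at h
  exact mul_left_cancel₀ h2 (by linear_combination h)

theorem trace_map_mul_map_mul_map_of_trace_map_cube [IsDomain R] (h6 : (6 : R) ≠ 0)
    (hcube : ∀ x, (T x ^ 3).trace = (x ^ 3).trace) (x y : Matrix m m R) :
    (T x * T x * T y).trace = (x * x * y).trace := by
  have h := trace_add_cube_sub_trace_sub_cube (T x) (T y)
  rw [← map_add, ← map_sub, hcube, hcube, hcube, trace_add_cube_sub_trace_sub_cube] at h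
  exact mul_left_cancel₀ h6 (by linear_combination -h)

end Polarization

theorem injective_of_trace_map_mul_map {m n R F : Type*} [Fintype m] [Fintype n]
    [NonAssocRing R] [FunLike F (Matrix m m R) (Matrix n n R)]
    [AddMonoidHomClass F (Matrix m m R) (Matrix n n R)] {T : F}
    (hmul : ∀ x y, (T x * T y).trace = (x * y).trace) : Function.Injective T := by
  classical
  refine (injective_iff_map_eq_zero T).mpr fun x hx ↦ ext_iff_trace_mul_right.mpr fun y ↦ ?_
  rw [← hmul, hx, zero_mul, zero_mul, trace_zero, trace_zero]

theorem map_mul_self_of_trace_map {m n R : Type*} [Fintype m] [Fintype n] [NonAssocSemiring R]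
    {T : Matrix m m R → Matrix n n R} (hsurj : Function.Surjective T)
    (hmul : ∀ x y, (T x * T y).trace = (x * y).trace)
    (hmul₃ : ∀ x y, (T x * T x * T y).trace = (x * x * y).trace) (x : Matrix m m R) :
    T (x * x) = T x * T x := by
  classical
  refine ext_iff_trace_mul_right.mpr fun y ↦ ?_
  obtain ⟨y, rfl⟩ := hsurj y
  rw [hmul, hmul₃]

theorem spectral_isometry_matrix_is_jordan_automorphism_general
    {n : Type*} [Fintype n] [DecidableEq n] (T : Matrix n n ℂ →ₗ[ℂ] Matrix n n ℂ)
    (hone : T 1 = 1)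
    (hiso : ∀ x, IsStarNormal x → spectralRadius ℂ (T x) = spectralRadius ℂ x) :
    Function.Bijective T ∧ ∀ x, T (x * x) = T x * T x := by
  have htrace := trace_pow_map T hone hiso
  have hmul := trace_map_mul_map_of_trace_map_sq T two_ne_zero (htrace 2)
  have hmul₃ := trace_map_mul_map_mul_map_of_trace_map_cube T (by norm_num) (htrace 3)
  have hinj : Function.Injective T := injective_of_trace_map_mul_map hmul
  have hsurj : Function.Surjective T := LinearMap.injective_iff_surjective.mp hinj
  exact ⟨⟨hinj, hsurj⟩, map_mul_self_of_trace_map hsurj hmul hmul₃⟩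

/-- Every unital spectral isometry of `Mₙ(ℂ)` into itself is a Jordan automorphism. -/
theorem spectral_isometry_matrix_is_jordan_automorphism
    {n : ℕ} (hn : 1 ≤ n)
    (T : Matrix (Fin n) (Fin n) ℂ →ₗ[ℂ] Matrix (Fin n) (Fin n) ℂ)
    (hone : T 1 = 1)
    (hiso : ∀ x, spectralRadius ℂ (T x) = spectralRadius ℂ x) :
    Function.Bijective T ∧ ∀ x, T (x * x) = T x * T x :=
  spectral_isometry_matrix_is_jordan_automorphism_general T hone fun x _ ↦ hiso x
end
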